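/- arXiv:2103.00671 — 2 statements merged into one kernel-verified Lean document; each statement's English description precedes it below -/
import Mathlib

section
/- There exists a deterministic learning algorithm A on X = {x ∈ ℝ² : ‖x‖ ≤ 1} such that for every γ ∈ (0,2] and all ε, δ ∈ (0,1): for every target h* = (x ↦ 1[⟨w*,x⟩ + b* ≥ 0]) with w* ≠ 0 and every distribution D over D_{h*} with margin γ, if m ≥ (48·log₂(64/γ)/ε)·log₂(26·log₂(64/γ)/ε) + (8·log₂(64/γ)/ε)·log₂(2/δ) then with probability at least 1−δ over S_trn ~ D^m, atk_D(h*, S_trn, A) ≤ ε. -/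
open MeasureTheory ENNReal RealInnerProductSpace

/-- The multiset of training examples determined by a tuple of i.i.d. draws. -/
def toTrain {α : Type*} {m : ℕ} (f : Fin m → α) : Multiset α := ↑(List.ofFn f)

/-- The distribution of `m` i.i.d. draws from `D`. -/
noncomputable def samples {α : Type*} [MeasurableSpace α] (D : Measure α) (m : ℕ) :
    Measure (Fin m → α) := Measure.pi fun _ => D

/-- The clean-label attackable rate of a deterministic learner. -/
noncomputable def atkDet {X : Type*} [MeasurableSpace X] (D : Measure (X × Bool)) (h : X → Bool)
    (S : Multiset (X × Bool)) (A : Multiset (X × Bool) → X → Bool) : ℝ≥0∞ :=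
  ⨆ Adv : {f : X → Multiset (X × Bool) // ∀ x : X, ∀ p ∈ f x, p.2 = h p.1},
    D {p : X × Bool | A (S + Adv.1 p.1) p.1 ≠ h p.1}

/-- The (topological) support of a measure. -/
def msupport {α : Type*} [TopologicalSpace α] [MeasurableSpace α] (D : Measure α) : Set α :=
  {p | ∀ U : Set α, IsOpen U → p ∈ U → 0 < D U}

/-- The closed unit ball of `ℝ²`, as an instance space. -/
abbrev UnitBall2 : Type := {x : EuclideanSpace ℝ (Fin 2) // ‖x‖ ≤ 1}

/-!
The linear functionals that separate a training set correctly form an open convex cone `C` in the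
plane. The learner orders the points by a dyadic direction of the coarsest possible level in `C`
and predicts `1` from the lowest positive example upwards. The cone cuts an arc out of the
`ℓ¹`-sphere, and if it contains a dyadic point of level `k + 1` but none of level `k`, then the arc
lies strictly between the two neighbours of that point. This has two consequences. The selected
direction is one of four integer points determined by `k` and the target. Moreover, since the arc
misses a neighbour, some positive and some negative example have almost the same score, so that a
misclassified point must have small margin once the level is large. Hence points of margin `γ` are
misclassified only along one of `O(log (1/γ))` directions that depend neither on the sample nor on
the attacker. A mistake along such a direction lies below all training examples of its label,
whatever the attacker adds, so for each direction and label these points form the error region of a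
one-sided test; each such region is small with high probability, and a union bound finishes the
proof.
-/

section OneSidedTests

variable {α : Type*} [TopologicalSpace α] [LinearOrder α] [OrderClosedTopology α]
  [MeasurableSpace α] [OpensMeasurableSpace α] (ν : Measure α)

theorem measurableSet_setOf_measure_Iio_le (r : ℝ≥0∞) : MeasurableSet {t | ν (Set.Iio t) ≤ r} := by
  have hlower : IsLowerSet {t | ν (Set.Iio t) ≤ r} := fun s t hts hs =>
    (measure_mono (Set.Iio_subset_Iio hts)).trans hs
  exact hlower.ordConnected.measurableSet

theorem le_measure_setOf_measure_Iio_le [IsFiniteMeasure ν] [ν.InnerRegularCompactLTTop] {r : ℝ≥0∞}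
    (hr : r ≤ ν Set.univ) : r ≤ ν {t | ν (Set.Iio t) ≤ r} := by
  have hmeas := measurableSet_setOf_measure_Iio_le ν r
  -- A compact set of points with `ν (Iio t) > r` has a least point, so it misses mass `r`.
  have hcompl : ν {t | ν (Set.Iio t) ≤ r}ᶜ ≤ ν Set.univ - r := by
    rw [hmeas.compl.measure_eq_iSup_isCompact_of_ne_top (measure_ne_top ν _)]
    refine iSup₂_le fun C hC => iSup_le fun hCcompact => ?_
    rcases C.eq_empty_or_nonempty with rfl | hne
    · simp
    obtain ⟨t, ht, hmin⟩ := hCcompact.exists_isLeast hne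
    have hlt : r < ν (Set.Iio t) := not_le.1 (Set.notMem_ofPred_iff.1 (hC ht))
    calc ν C ≤ ν (Set.Iio t)ᶜ := measure_mono fun s hs => not_lt.2 (hmin hs)
      _ = ν Set.univ - ν (Set.Iio t) := measure_compl measurableSet_Iio (measure_ne_top ν _)
      _ ≤ ν Set.univ - r := tsub_le_tsub_left hlt.le _
  rw [measure_compl hmeas (measure_ne_top ν _)] at hcompl
  exact (ENNReal.sub_le_sub_iff_left hr (measure_ne_top ν _)).1 hcompl

variable {Z : Type*}

/-- The points of `P` scoring strictly below every sample that lies in `P`: the region on which a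
one-sided test, calibrated on the sample `f`, still errs. -/
def undercutRegion (P : Set Z) (g : Z → ℝ) {m : ℕ} (f : Fin m → Z) : Set Z :=
  {z | z ∈ P ∧ ∀ i, f i ∈ P → g z < g (f i)}

variable [MeasurableSpace Z] (D : Measure Z) [IsProbabilityMeasure D]

instance isProbabilityMeasure_samples (m : ℕ) : IsProbabilityMeasure (samples D m) := by
  unfold samples
  infer_instance

theorem ae_samples_of_ae {p : Z → Prop} (hp : ∀ᵐ z ∂D, p z) (m : ℕ) :
    ∀ᵐ f ∂samples D m, ∀ i, p (f i) :=
  ae_all_iff.2 fun i => (Measure.quasiMeasurePreserving_eval (fun _ : Fin m => D) i).ae hp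

theorem samples_forall_notMem_le {E : Set Z} (hE : MeasurableSet E) {r : ℝ} (hr : 0 ≤ r)
    (hrE : ENNReal.ofReal r ≤ D E) (m : ℕ) :
    samples D m {f | ∀ i, f i ∉ E} ≤ ENNReal.ofReal (Real.exp (-(r * m))) := by
  have hpi : {f : Fin m → Z | ∀ i, f i ∉ E} = Set.univ.pi fun _ => Eᶜ := by
    ext f
    simp
  have hcompl : D Eᶜ ≤ ENNReal.ofReal (Real.exp (-r)) :=
    calc D Eᶜ = 1 - D E := prob_compl_eq_one_sub hE
      _ ≤ ENNReal.ofReal 1 - ENNReal.ofReal r := by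
        rw [ENNReal.ofReal_one]
        exact tsub_le_tsub_left hrE 1
      _ = ENNReal.ofReal (1 - r) := (ENNReal.ofReal_sub 1 hr).symm
      _ ≤ ENNReal.ofReal (Real.exp (-r)) := ENNReal.ofReal_le_ofReal (Real.one_sub_le_exp_neg r)
  calc samples D m {f | ∀ i, f i ∉ E} = D Eᶜ ^ m := by
        rw [samples, hpi, Measure.pi_pi, Finset.prod_const, Finset.card_univ, Fintype.card_fin]
    _ ≤ ENNReal.ofReal (Real.exp (-r)) ^ m := pow_le_pow_left' hcompl m
    _ = ENNReal.ofReal (Real.exp (-(r * m))) := by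
      rw [← ENNReal.ofReal_pow (Real.exp_pos _).le, ← Real.exp_nat_mul, mul_neg, mul_comm]

theorem samples_lt_measure_undercutRegion_le {P : Set Z} (hP : MeasurableSet P) {g : Z → ℝ}
    (hg : Measurable g) {r : ℝ} (hr : 0 ≤ r) (m : ℕ) :
    samples D m {f | ENNReal.ofReal r < D (undercutRegion P g f)} ≤
      ENNReal.ofReal (Real.exp (-(r * m))) := by
  have hν : ∀ s, MeasurableSet s → (D.restrict P).map g s = D (g ⁻¹' s ∩ P) := fun s hs => by
    rw [Measure.map_apply hg hs, Measure.restrict_apply (hg hs)]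
  set low : Set ℝ := {t | (D.restrict P).map g (Set.Iio t) ≤ ENNReal.ofReal r}
  have hlow_meas : MeasurableSet low := measurableSet_setOf_measure_Iio_le _ _
  rcases lt_or_ge (D P) (ENNReal.ofReal r) with hDP | hDP
  · have hempty : {f : Fin m → Z | ENNReal.ofReal r < D (undercutRegion P g f)} = ∅ :=
      Set.eq_empty_of_forall_notMem fun f hf =>
        (hf.trans_le (measure_mono fun z hz => hz.1)).not_gt hDP
    simp [hempty]
  · have hmass : ENNReal.ofReal r ≤ D (g ⁻¹' low ∩ P) := by
      rw [← hν _ hlow_meas]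
      refine le_measure_setOf_measure_Iio_le _ ?_
      simpa [hν _ MeasurableSet.univ] using hDP
    refine le_trans (measure_mono (Set.ofPred_subset_ofPred.2 fun f hf i hi => ?_))
      (samples_forall_notMem_le D ((hg hlow_meas).inter hP) hr hmass m)
    have hsub : undercutRegion P g f ⊆ g ⁻¹' Set.Iio (g (f i)) ∩ P := fun z hz =>
      ⟨hz.2 i hi.2, hz.1⟩
    have hle : D (g ⁻¹' Set.Iio (g (f i)) ∩ P) ≤ ENNReal.ofReal r := by
      rw [← hν _ measurableSet_Iio]
      exact hi.1
    exact hf.not_ge ((measure_mono hsub).trans hle)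

theorem samples_exists_lt_measure_undercutRegion_le {ι : Type*} (I : Finset ι) {P : ι → Set Z}
    (hP : ∀ c ∈ I, MeasurableSet (P c)) {g : ι → Z → ℝ} (hg : ∀ c ∈ I, Measurable (g c)) {r : ℝ}
    (hr : 0 ≤ r) (m : ℕ) :
    samples D m {f | ∃ c ∈ I, ENNReal.ofReal r < D (undercutRegion (P c) (g c) f)} ≤
      ENNReal.ofReal (I.card * Real.exp (-(r * m))) := by
  have hunion : {f : Fin m → Z | ∃ c ∈ I, ENNReal.ofReal r < D (undercutRegion (P c) (g c) f)} =
      ⋃ c ∈ I, {f | ENNReal.ofReal r < D (undercutRegion (P c) (g c) f)} := by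
    ext f
    simp
  calc _ ≤ ∑ c ∈ I, samples D m {f | ENNReal.ofReal r < D (undercutRegion (P c) (g c) f)} := by
        rw [hunion]
        exact measure_biUnion_finset_le _ _
    _ ≤ ∑ _c ∈ I, ENNReal.ofReal (Real.exp (-(r * m))) := Finset.sum_le_sum fun c hc =>
        samples_lt_measure_undercutRegion_le D (hP c hc) (hg c hc) hr m
    _ = ENNReal.ofReal (I.card * Real.exp (-(r * m))) := by
      rw [Finset.sum_const, nsmul_eq_mul, ENNReal.ofReal_mul (by positivity),
        ENNReal.ofReal_natCast]

end OneSidedTests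

section AttackableRate

theorem mem_toTrain {α : Type*} {m : ℕ} {f : Fin m → α} {a : α} :
    a ∈ toTrain f ↔ ∃ i, f i = a := by
  simp [toTrain]

variable {X ι : Type*}

/-- Every error of `A` on the example `p`, made after training on any multiset labelled by `h`, is
witnessed by a test `c ∈ I` such that `p` lies in `P c` and scores strictly below all training
examples in `P c`. -/
def ErrorsUndercut (A : Multiset (X × Bool) → X → Bool) (h : X → Bool) (I : Finset ι)
    (P : ι → Set (X × Bool)) (g : ι → X × Bool → ℝ) (p : X × Bool) : Prop :=
  ∀ T : Multiset (X × Bool), (∀ q ∈ T, q.2 = h q.1) → A T p.1 ≠ h p.1 →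
    ∃ c ∈ I, p ∈ P c ∧ ∀ q ∈ T, q ∈ P c → g c p < g c q

variable [MeasurableSpace X] {D : Measure (X × Bool)} {A : Multiset (X × Bool) → X → Bool}
  {h : X → Bool} {I : Finset ι} {P : ι → Set (X × Bool)} {g : ι → X × Bool → ℝ}

theorem atkDet_le_sum_measure_undercutRegion (herr : ∀ᵐ p ∂D, ErrorsUndercut A h I P g p) {m : ℕ}
    {f : Fin m → X × Bool} (hf : ∀ i, (f i).2 = h (f i).1) :
    atkDet D h (toTrain f) A ≤ ∑ c ∈ I, D (undercutRegion (P c) (g c) f) := by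
  refine iSup_le fun ⟨Adv, hAdv⟩ => ?_
  refine le_trans (measure_mono_ae ?_) (measure_biUnion_finset_le I _)
  filter_upwards [herr] with p hp hwrong
  have hclean : ∀ q ∈ toTrain f + Adv p.1, q.2 = h q.1 := fun q hq => by
    rcases Multiset.mem_add.1 hq with hq | hq
    · obtain ⟨i, rfl⟩ := mem_toTrain.1 hq
      exact hf i
    · exact hAdv p.1 q hq
  obtain ⟨c, hc, hpP, hlt⟩ := hp _ hclean hwrong
  exact Set.mem_biUnion hc
    ⟨hpP, fun i => hlt (f i) (Multiset.mem_add.2 (Or.inl (mem_toTrain.2 ⟨i, rfl⟩)))⟩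

theorem ofReal_one_sub_le_samples_atkDet_le [IsProbabilityMeasure D]
    (hlabel : ∀ᵐ p ∂D, p.2 = h p.1) (herr : ∀ᵐ p ∂D, ErrorsUndercut A h I P g p)
    (hP : ∀ c ∈ I, MeasurableSet (P c)) (hg : ∀ c ∈ I, Measurable (g c)) {r : ℝ} (hr : 0 ≤ r)
    (m : ℕ) :
    ENNReal.ofReal (1 - I.card * Real.exp (-(r * m))) ≤
      samples D m {f | atkDet D h (toTrain f) A ≤ ENNReal.ofReal (I.card * r)} := by
  set good := {f : Fin m → X × Bool | atkDet D h (toTrain f) A ≤ ENNReal.ofReal (I.card * r)}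
  have hbad : samples D m goodᶜ ≤ ENNReal.ofReal (I.card * Real.exp (-(r * m))) := by
    refine le_trans (measure_mono_ae ?_)
      (samples_exists_lt_measure_undercutRegion_le D I hP hg hr m)
    filter_upwards [ae_samples_of_ae D hlabel m] with f hf hfbad
    by_contra! hsmall
    refine hfbad ((atkDet_le_sum_measure_undercutRegion herr hf).trans ?_)
    calc ∑ c ∈ I, D (undercutRegion (P c) (g c) f) ≤ ∑ _c ∈ I, ENNReal.ofReal r :=
          Finset.sum_le_sum fun c hc => not_lt.1 fun hlt => hsmall ⟨c, hc, hlt⟩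
      _ = ENNReal.ofReal (I.card * r) := by
        rw [Finset.sum_const, nsmul_eq_mul, ENNReal.ofReal_mul (by positivity),
          ENNReal.ofReal_natCast]
  rw [ENNReal.ofReal_sub _ (by positivity), ENNReal.ofReal_one, tsub_le_iff_right]
  calc (1 : ℝ≥0∞) = samples D m (good ∪ goodᶜ) := by rw [Set.union_compl_self, measure_univ]
    _ ≤ samples D m good + samples D m goodᶜ := measure_union_le _ _
    _ ≤ _ := by gcongr

end AttackableRate

section Cones

theorem coeff_pos_of_mem_cone {E : Type*} [AddCommGroup E] [Module ℝ E] {C : ConvexCone ℝ E}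
    (hC : C.Blunt) {p q : E} (hp : p ∉ C) (hq : q ∉ C) (hpq : p + q ∈ C) {α β : ℝ}
    (h : α • p + β • q ∈ C) : 0 < α := by
  have hadd : ∀ c : ℝ, 0 ≤ c → (α + c) • p + (β + c) • q ∈ C := fun c hc => by
    rcases hc.eq_or_lt with rfl | hc
    · simpa using h
    · have heq : (α + c) • p + (β + c) • q = α • p + β • q + c • (p + q) := by module
      exact heq ▸ C.add_mem h (C.smul_mem hc hpq)
  -- Adding the right multiple of `p + q` kills the smaller coefficient.
  by_contra! hα
  rcases lt_trichotomy α β with hlt | rfl | hlt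
  · have hmem : (β - α) • q ∈ C := by simpa [← sub_eq_add_neg] using hadd (-α) (by linarith)
    exact hq ((C.smul_mem_iff (sub_pos.2 hlt)).1 hmem)
  · exact hC (by simpa using hadd (-α) (by linarith))
  · have hmem : (α - β) • p ∈ C := by simpa [← sub_eq_add_neg] using hadd (-β) (by linarith)
    exact hp ((C.smul_mem_iff (sub_pos.2 hlt)).1 hmem)

theorem exists_eq_smul_add_smul_tangent {p : ℝ × ℝ} {s t : ℝ} (hs : s * s = 1) (ht : t * t = 1)
    (hp : 0 < s * p.1 + t * p.2) (u : ℝ × ℝ) : ∃ σ κ : ℝ, u = σ • p + κ • (s, -t) := by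
  set σ : ℝ := (s * u.1 + t * u.2) / (s * p.1 + t * p.2)
  have hσ : σ * (s * p.1 + t * p.2) = s * u.1 + t * u.2 := div_mul_cancel₀ _ hp.ne'
  refine ⟨σ, s * (u.1 - σ * p.1), Prod.ext ?_ ?_⟩
  · simp only [Prod.fst_add, Prod.smul_fst, smul_eq_mul]
    linear_combination (σ * p.1 - u.1) * hs
  · simp only [Prod.snd_add, Prod.smul_snd, smul_eq_mul]
    linear_combination (-t) * hσ + (σ * p.2 - u.2) * ht

theorem abs_lt_of_smul_add_smul_mem_cone {E : Type*} [AddCommGroup E] [Module ℝ E]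
    {C : ConvexCone ℝ E} (hC : C.Blunt) {p w : E} (hp : p ∈ C) (hsub : p - w ∉ C) (hadd : p + w ∉ C)
    {σ κ : ℝ} (h : σ • p + κ • w ∈ C) : |κ| < σ := by
  have hmid : p - w + (p + w) ∈ C := by
    have htwo : p - w + (p + w) = (2 : ℝ) • p := by module
    exact htwo ▸ C.smul_mem two_pos hp
  have hcomb : σ • p + κ • w = ((σ - κ) / 2) • (p - w) + ((σ + κ) / 2) • (p + w) := by module
  have hcoeff_sub : 0 < (σ - κ) / 2 := coeff_pos_of_mem_cone hC hsub hadd hmid (hcomb ▸ h)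
  have hcoeff_add : 0 < (σ + κ) / 2 :=
    coeff_pos_of_mem_cone hC hadd hsub (add_comm (p - w) _ ▸ hmid)
      (add_comm (((σ - κ) / 2) • (p - w)) _ ▸ hcomb ▸ h)
  exact abs_lt.2 ⟨by linarith, by linarith⟩

theorem abs_eq_mul_of_abs_eq_one {s x : ℝ} (hs : |s| = 1) (hx : 0 ≤ s * x) : |x| = s * x := by
  rw [← abs_of_nonneg hx, abs_mul, hs, one_mul]

-- The cone meets the `ℓ¹`-sphere in an arc, which contains `p` but neither of the points
-- `p ± (s, -t)` of the sphere on both sides of `p`, so the whole arc stays close to `p`.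
theorem norm_sub_lt_one_of_mem_cone {C : ConvexCone ℝ (ℝ × ℝ)} (hC : C.Blunt) {p u : ℝ × ℝ}
    {s t : ℝ} (hs : |s| = 1) (ht : |t| = 1) (hps : 1 ≤ s * p.1) (hpt : 1 ≤ t * p.2) (hp : p ∈ C)
    (hsub : p - (s, -t) ∉ C) (hadd : p + (s, -t) ∉ C) (hu : u ∈ C)
    (hnorm : |u.1| + |u.2| = s * p.1 + t * p.2) : ‖u - p‖ < 1 := by
  have hss : s * s = 1 := by rw [← abs_mul_abs_self, hs, one_mul]
  have htt : t * t = 1 := by rw [← abs_mul_abs_self, ht, one_mul]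
  have hpos : 0 < s * p.1 + t * p.2 := by linarith
  obtain ⟨σ, κ, rfl⟩ := exists_eq_smul_add_smul_tangent hss htt hpos u
  have hκσ : |κ| < σ := abs_lt_of_smul_add_smul_mem_cone hC hp hsub hadd hu
  obtain ⟨hκ_lower, hκ_upper⟩ := abs_lt.1 hκσ
  have hfst : s * (σ * p.1 + κ * s) = σ * (s * p.1) + κ := by linear_combination κ * hss
  have hsnd : t * (σ * p.2 + κ * -t) = σ * (t * p.2) - κ := by linear_combination (-κ) * htt
  simp only [Prod.fst_add, Prod.snd_add, Prod.smul_fst, Prod.smul_snd, smul_eq_mul] at hnorm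
  rw [abs_eq_mul_of_abs_eq_one hs (hfst ▸ by nlinarith),
    abs_eq_mul_of_abs_eq_one ht (hsnd ▸ by nlinarith), hfst, hsnd] at hnorm
  obtain rfl : σ = 1 := mul_right_cancel₀ hpos.ne' (by linarith)
  rw [one_smul, add_sub_cancel_left, norm_smul, Prod.norm_def, Real.norm_eq_abs]
  simpa [hs, ht] using hκσ

end Cones

section Separation

/-- The score functions that rank every positive example of `T` strictly above every negative
one. -/
def separatingCone {X : Type*} (T : Multiset (X × Bool)) : ConvexCone ℝ (X → ℝ) where
  carrier := {g | ∀ x y, (x, true) ∈ T → (y, false) ∈ T → g y < g x}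
  smul_mem' _ hc _ hg x y hx hy := mul_lt_mul_of_pos_left (hg x y hx hy) hc
  add_mem' _ hg _ hg' x y hx hy := add_lt_add (hg x y hx hy) (hg' x y hx hy)

variable {X : Type*} {T : Multiset (X × Bool)} {g : X → ℝ}

theorem mem_separatingCone :
    g ∈ separatingCone T ↔ ∀ x y, (x, true) ∈ T → (y, false) ∈ T → g y < g x :=
  Iff.rfl

theorem mem_separatingCone_of_threshold {β : ℝ} (hT : ∀ q ∈ T, q.2 = decide (0 ≤ g q.1 + β)) :
    g ∈ separatingCone T := fun x y hx hy => by
  have hx0 : 0 ≤ g x + β := by simpa using hT _ hx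
  have hy0 : g y + β < 0 := by simpa using hT _ hy
  linarith

theorem isOpen_separatingCone (T : Multiset (X × Bool)) :
    IsOpen (separatingCone T : Set (X → ℝ)) := by
  have hInter : (separatingCone T : Set (X → ℝ)) =
      ⋂ p ∈ {p | p ∈ T}, ⋂ q ∈ {q | q ∈ T},
        {g | p.2 = true → q.2 = false → g q.1 < g p.1} := by
    ext g
    simp only [SetLike.mem_coe, mem_separatingCone, Set.mem_iInter, Set.mem_ofPred_eq]
    grind
  rw [hInter]
  refine T.finite_toSet.isOpen_biInter fun p _ => T.finite_toSet.isOpen_biInter fun q _ => ?_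
  by_cases hpq : p.2 = true ∧ q.2 = false
  · simpa [hpq] using isOpen_lt (continuous_apply q.1) (continuous_apply p.1)
  · have huniv : {g : X → ℝ | p.2 = true → q.2 = false → g q.1 < g p.1} = Set.univ := by
      ext g
      simp only [Set.mem_ofPred_eq, Set.mem_univ]
      grind
    simp [huniv]

end Separation

section IntegerDirections

theorem exists_int_abs_eq_abs_sub_eq (x : ℝ) {n : ℤ} (hn : 0 ≤ n) :
    ∃ a : ℤ, |a| = n ∧ |x - a| = |(|x| - n)| := by
  rcases le_total 0 x with hx | hx
  · exact ⟨n, abs_of_nonneg hn, by rw [abs_of_nonneg hx]⟩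
  · refine ⟨-n, by rw [abs_neg, abs_of_nonneg hn], ?_⟩
    rw [abs_of_nonpos hx, ← abs_neg]
    push_cast
    ring_nf

/-- An integer vector as a point of the real plane. -/
def toPlane : ℤ × ℤ →+ ℝ × ℝ := (Int.castAddHom ℝ).prodMap (Int.castAddHom ℝ)

theorem toPlane_apply (d : ℤ × ℤ) : toPlane d = ((d.1 : ℝ), (d.2 : ℝ)) := rfl

theorem exists_int_near_of_abs_add_abs_eq {v : ℝ × ℝ} {n : ℤ} (hv : |v.1| + |v.2| = n) :
    ∃ d : ℤ × ℤ, |d.1| + |d.2| = n ∧ ‖v - toPlane d‖ ≤ 1 := by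
  have hfloor : ⌊|v.1|⌋ ≤ n := Int.floor_le_iff.2 (by linarith [abs_nonneg v.2])
  obtain ⟨a, ha, hva⟩ := exists_int_abs_eq_abs_sub_eq v.1 (Int.floor_nonneg.2 (abs_nonneg v.1))
  obtain ⟨b, hb, hvb⟩ := exists_int_abs_eq_abs_sub_eq v.2 (sub_nonneg.2 hfloor)
  have h1 : |v.1 - a| ≤ 1 := by
    rw [hva, abs_le]
    constructor <;> linarith [Int.floor_le |v.1|, Int.lt_floor_add_one |v.1|]
  have h2 : |v.2 - b| ≤ 1 := by
    rw [hvb, abs_le]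
    push_cast
    constructor <;> linarith [Int.floor_le |v.1|, Int.lt_floor_add_one |v.1|]
  exact ⟨(a, b), by rw [ha, hb]; ring, by simpa [toPlane_apply, Prod.norm_def] using ⟨h1, h2⟩⟩

/-- A step along the `ℓ¹`-sphere at an integer point lying off the coordinate axes. -/
def sphereStep (d : ℤ × ℤ) : ℤ × ℤ := (d.1.sign, -d.2.sign)

theorem abs_add_sign {n : ℤ} (hn : n ≠ 0) : |n + n.sign| = |n| + 1 := by
  rcases hn.lt_or_gt with hn | hn
  · rw [Int.sign_eq_neg_one_of_neg hn, abs_of_neg hn, abs_of_neg (by omega)]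
    ring
  · rw [Int.sign_eq_one_of_pos hn, abs_of_pos hn, abs_of_pos (by omega)]

theorem abs_sub_sign {n : ℤ} (hn : n ≠ 0) : |n - n.sign| = |n| - 1 := by
  rcases hn.lt_or_gt with hn | hn
  · rw [Int.sign_eq_neg_one_of_neg hn, abs_of_neg hn, abs_of_nonpos (by omega)]
    ring
  · rw [Int.sign_eq_one_of_pos hn, abs_of_pos hn, abs_of_nonneg (by omega)]

theorem abs_add_abs_add_sphereStep {d : ℤ × ℤ} (h1 : d.1 ≠ 0) (h2 : d.2 ≠ 0) :
    |(d + sphereStep d).1| + |(d + sphereStep d).2| = |d.1| + |d.2| := by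
  simp only [sphereStep, Prod.fst_add, Prod.snd_add, ← sub_eq_add_neg, abs_add_sign h1,
    abs_sub_sign h2]
  ring

theorem abs_add_abs_sub_sphereStep {d : ℤ × ℤ} (h1 : d.1 ≠ 0) (h2 : d.2 ≠ 0) :
    |(d - sphereStep d).1| + |(d - sphereStep d).2| = |d.1| + |d.2| := by
  simp only [sphereStep, Prod.fst_sub, Prod.snd_sub, sub_neg_eq_add, abs_sub_sign h1,
    abs_add_sign h2]
  ring

theorem norm_toPlane_sphereStep_le (d : ℤ × ℤ) : ‖toPlane (sphereStep d)‖ ≤ 1 := by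
  have habs : ∀ n : ℤ, |(n.sign : ℝ)| ≤ 1 := fun n => by
    rcases Int.sign_trichotomy n with h | h | h <;> simp [h]
  simpa [toPlane_apply, sphereStep, Prod.norm_def] using ⟨habs d.1, habs d.2⟩

end IntegerDirections

section DyadicDirections

/-- The integer directions in `C` on the `ℓ¹`-sphere of radius `2 ^ k`. Up to scaling, these are the
directions of the dyadic grid of mesh `2 ^ (-k)` on the unit sphere. -/
def dyadicDirections (C : ConvexCone ℝ (ℝ × ℝ)) (k : ℕ) : Set (ℤ × ℤ) :=
  {d | |d.1| + |d.2| = 2 ^ k ∧ toPlane d ∈ C}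

/-- The coarsest level at which `C` contains a dyadic direction (`0` if there is none). -/
noncomputable def coarsestLevel (C : ConvexCone ℝ (ℝ × ℝ)) : ℕ :=
  sInf {k | (dyadicDirections C k).Nonempty}

open Classical in
/-- A dyadic direction of the coarsest possible level in `C` (`0` if there is none). -/
noncomputable def coarsestDirection (C : ConvexCone ℝ (ℝ × ℝ)) : ℤ × ℤ :=
  if h : (dyadicDirections C (coarsestLevel C)).Nonempty then h.some else 0

variable {C : ConvexCone ℝ (ℝ × ℝ)} {k : ℕ} {d : ℤ × ℤ} {u : ℝ × ℝ}

theorem exists_dyadicDirections_nonempty (hC : IsOpen (C : Set (ℝ × ℝ))) (hu : u ∈ C)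
    (hnorm : |u.1| + |u.2| = 1) : ∃ k, (dyadicDirections C k).Nonempty := by
  obtain ⟨r, hr, hball⟩ := Metric.isOpen_iff.1 hC u hu
  obtain ⟨k, hk⟩ := exists_pow_lt_of_lt_one hr (show (1 / 2 : ℝ) < 1 by norm_num)
  have hscale : |((2 : ℝ) ^ k • u).1| + |((2 : ℝ) ^ k • u).2| = ((2 ^ k : ℤ) : ℝ) := by
    simp [abs_mul, ← mul_add, hnorm]
  obtain ⟨d, hd, hnear⟩ := exists_int_near_of_abs_add_abs_eq hscale
  have hmem : (1 / 2 : ℝ) ^ k • toPlane d ∈ C := by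
    refine hball (mem_ball_iff_norm'.2 ?_)
    have hsub :
        u - (1 / 2 : ℝ) ^ k • toPlane d = (1 / 2 : ℝ) ^ k • ((2 : ℝ) ^ k • u - toPlane d) := by
      rw [smul_sub, smul_smul, ← mul_pow]
      norm_num
    rw [hsub, norm_smul, Real.norm_of_nonneg (by positivity)]
    exact (mul_le_of_le_one_right (by positivity) hnear).trans_lt hk
  exact ⟨k, d, hd, (C.smul_mem_iff (by positivity)).1 hmem⟩

theorem coarsestDirection_mem (h : ∃ k, (dyadicDirections C k).Nonempty) :
    coarsestDirection C ∈ dyadicDirections C (coarsestLevel C) := by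
  have hne : (dyadicDirections C (coarsestLevel C)).Nonempty := Nat.sInf_mem h
  rw [coarsestDirection, dif_pos hne]
  exact hne.some_mem

theorem dyadicDirections_eq_empty_of_lt (hk : k < coarsestLevel C) : dyadicDirections C k = ∅ :=
  Set.not_nonempty_iff_eq_empty.1 (Nat.notMem_of_lt_sInf hk)

theorem blunt_of_dyadicDirections_eq_empty (hC : IsOpen (C : Set (ℝ × ℝ)))
    (hk : dyadicDirections C k = ∅) : C.Blunt := fun h0 => by
  obtain ⟨r, hr, hball⟩ := Metric.isOpen_iff.1 hC 0 h0
  have hmem : (r / 2) • ((1 : ℝ), (0 : ℝ)) ∈ C := by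
    refine hball ?_
    rw [mem_ball_zero_iff, norm_smul, Real.norm_of_nonneg (by positivity)]
    simpa [Prod.norm_def] using hr
  refine (Set.eq_empty_iff_forall_notMem.1 hk) (2 ^ k, 0) ⟨by simp, ?_⟩
  have hdir : toPlane (2 ^ k, 0) = (2 : ℝ) ^ k • ((1 : ℝ), (0 : ℝ)) := by simp [toPlane_apply]
  rw [hdir]
  exact C.smul_mem (by positivity) ((C.smul_mem_iff (by positivity)).1 hmem)

theorem toPlane_notMem_of_even (hk : dyadicDirections C k = ∅) (h1 : Even d.1) (h2 : Even d.2)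
    (hd : |d.1| + |d.2| = 2 ^ (k + 1)) : toPlane d ∉ C := fun hmem => by
  obtain ⟨a, ha⟩ := h1.two_dvd
  obtain ⟨b, hb⟩ := h2.two_dvd
  have hhalf : toPlane d = (2 : ℝ) • toPlane (a, b) := by simp [toPlane_apply, ha, hb]
  refine (Set.eq_empty_iff_forall_notMem.1 hk) (a, b) ⟨?_, ?_⟩
  · rw [ha, hb, abs_mul, abs_mul, abs_two, pow_succ'] at hd
    linarith
  · exact (C.smul_mem_iff two_pos).1 (hhalf ▸ hmem)

theorem odd_and_odd_of_mem_dyadicDirections (hk : dyadicDirections C k = ∅)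
    (hd : d ∈ dyadicDirections C (k + 1)) : Odd d.1 ∧ Odd d.2 := by
  have hparity : Even d.1 ↔ Even d.2 := by
    have hsum : Even (|d.1| + |d.2|) := by
      rw [hd.1]
      exact even_two.pow_of_ne_zero k.succ_ne_zero
    rwa [Int.even_add, even_abs, even_abs] at hsum
  have hodd : Odd d.1 := Int.not_even_iff_odd.1 fun h1 =>
    toPlane_notMem_of_even hk h1 (hparity.1 h1) hd.1 hd.2
  exact ⟨hodd, Int.not_even_iff_odd.1 fun h2 => Int.not_even_iff_odd.2 hodd (hparity.2 h2)⟩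

theorem ne_zero_of_odd {n : ℤ} (hn : Odd n) : n ≠ 0 := by
  rintro rfl
  exact Int.not_odd_zero hn

theorem toPlane_add_sphereStep_notMem (hk : dyadicDirections C k = ∅)
    (hd : d ∈ dyadicDirections C (k + 1)) : toPlane (d + sphereStep d) ∉ C := by
  obtain ⟨h1, h2⟩ := odd_and_odd_of_mem_dyadicDirections hk hd
  have hne1 := ne_zero_of_odd h1
  have hne2 := ne_zero_of_odd h2
  exact toPlane_notMem_of_even hk (h1.add_odd (Int.odd_sign_iff.2 hne1))
    (h2.add_odd (Int.odd_sign_iff.2 hne2).neg)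
    ((abs_add_abs_add_sphereStep hne1 hne2).trans hd.1)

theorem toPlane_sub_sphereStep_notMem (hk : dyadicDirections C k = ∅)
    (hd : d ∈ dyadicDirections C (k + 1)) : toPlane (d - sphereStep d) ∉ C := by
  obtain ⟨h1, h2⟩ := odd_and_odd_of_mem_dyadicDirections hk hd
  have hne1 := ne_zero_of_odd h1
  have hne2 := ne_zero_of_odd h2
  exact toPlane_notMem_of_even hk (h1.sub_odd (Int.odd_sign_iff.2 hne1))
    (h2.sub_odd (Int.odd_sign_iff.2 hne2).neg)
    ((abs_add_abs_sub_sphereStep hne1 hne2).trans hd.1)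

theorem norm_smul_sub_toPlane_lt_one (hC : IsOpen (C : Set (ℝ × ℝ)))
    (hk : dyadicDirections C k = ∅) (hd : d ∈ dyadicDirections C (k + 1)) (hu : u ∈ C)
    (hnorm : |u.1| + |u.2| = 1) : ‖(2 : ℝ) ^ (k + 1) • u - toPlane d‖ < 1 := by
  obtain ⟨h1, h2⟩ := odd_and_odd_of_mem_dyadicDirections hk hd
  have habs_sign : ∀ n : ℤ, Odd n → |(n.sign : ℝ)| = 1 := fun n hn => by
    exact_mod_cast Int.abs_sign_of_ne_zero (ne_zero_of_odd hn)
  have hsign_mul : ∀ n : ℤ, (n.sign : ℝ) * n = |(n : ℝ)| := fun n => by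
    exact_mod_cast Int.sign_mul_self_eq_abs n
  have hone_le : ∀ n : ℤ, Odd n → 1 ≤ (n.sign : ℝ) * n := fun n hn => by
    rw [hsign_mul]
    exact_mod_cast Int.one_le_abs (ne_zero_of_odd hn)
  have hstep : ((d.1.sign : ℝ), -(d.2.sign : ℝ)) = toPlane (sphereStep d) := by
    simp [toPlane_apply, sphereStep]
  refine norm_sub_lt_one_of_mem_cone (s := d.1.sign) (t := d.2.sign)
    (blunt_of_dyadicDirections_eq_empty hC hk) (habs_sign _ h1) (habs_sign _ h2) (hone_le _ h1)
    (hone_le _ h2) hd.2 ?_ ?_ (C.smul_mem (by positivity) hu) ?_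
  · rw [hstep, ← map_sub]
    exact toPlane_sub_sphereStep_notMem hk hd
  · rw [hstep, ← map_add]
    exact toPlane_add_sphereStep_notMem hk hd
  · have hsphere : |(d.1 : ℝ)| + |(d.2 : ℝ)| = 2 ^ (k + 1) := by exact_mod_cast hd.1
    rw [toPlane_apply, hsign_mul, hsign_mul, hsphere, Prod.smul_fst, Prod.smul_snd, smul_eq_mul,
      smul_eq_mul, abs_mul, abs_mul, ← mul_add, hnorm, mul_one, abs_of_pos (by positivity)]

/-- The dyadic directions of level at most `K` that can occur as a coarsest direction of an open
cone containing `u`: all those of level `0`, and at higher levels the four integer points around the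
multiple of `u` on the corresponding sphere. -/
noncomputable def candidates (u : ℝ × ℝ) (K : ℕ) : Finset (ℤ × ℤ) :=
  {(1, 0), (-1, 0), (0, 1), (0, -1)} ∪ (Finset.range K).biUnion fun k =>
    Finset.Icc ⌊2 ^ (k + 1) * u.1⌋ (⌊2 ^ (k + 1) * u.1⌋ + 1) ×ˢ
      Finset.Icc ⌊2 ^ (k + 1) * u.2⌋ (⌊2 ^ (k + 1) * u.2⌋ + 1)

theorem card_candidates_le (u : ℝ × ℝ) (K : ℕ) : (candidates u K).card ≤ 4 * (K + 1) := by
  refine (Finset.card_union_le _ _).trans ?_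
  rw [mul_add, mul_one, add_comm]
  refine add_le_add ?_ Finset.card_le_four
  refine (Finset.card_biUnion_le_card_mul _ _ 4 fun k _ => ?_).trans (by simp [mul_comm])
  simp [add_assoc]

theorem mem_Icc_floor_of_abs_sub_lt_one {x : ℝ} {a : ℤ} (h : |x - a| < 1) :
    a ∈ Finset.Icc ⌊x⌋ (⌊x⌋ + 1) := by
  obtain ⟨hlo, hhi⟩ := abs_lt.1 h
  have hle : a - 1 ≤ ⌊x⌋ := Int.le_floor.2 (by push_cast; linarith)
  have hge : ⌊x⌋ < a + 1 := Int.floor_lt.2 (by push_cast; linarith)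
  exact Finset.mem_Icc.2 ⟨by omega, by omega⟩

theorem coarsestDirection_mem_candidates (hC : IsOpen (C : Set (ℝ × ℝ))) (hu : u ∈ C)
    (hnorm : |u.1| + |u.2| = 1) {K : ℕ} (hK : coarsestLevel C ≤ K) :
    coarsestDirection C ∈ candidates u K := by
  have hmem := coarsestDirection_mem (exists_dyadicDirections_nonempty hC hu hnorm)
  rcases hlevel : coarsestLevel C with _ | k
  · have hsphere : |(coarsestDirection C).1| + |(coarsestDirection C).2| = 1 := by
      simpa [hlevel] using hmem.1
    refine Finset.mem_union_left _ ?_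
    simp only [Finset.mem_insert, Finset.mem_singleton, Prod.ext_iff]
    grind
  · rw [hlevel] at hmem hK
    have hnear := norm_smul_sub_toPlane_lt_one hC
      (dyadicDirections_eq_empty_of_lt (hlevel ▸ k.lt_succ_self)) hmem hu hnorm
    rw [Prod.norm_def, max_lt_iff] at hnear
    exact Finset.mem_union_right _ (Finset.mem_biUnion.2 ⟨k, Finset.mem_range.2 hK,
      Finset.mem_product.2 ⟨mem_Icc_floor_of_abs_sub_lt_one hnear.1,
        mem_Icc_floor_of_abs_sub_lt_one hnear.2⟩⟩)

end DyadicDirections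

section DyadicLearner

/-- The linear functional of the disc with coefficient vector `c`. -/
def planeScore : ℝ × ℝ →ₗ[ℝ] UnitBall2 → ℝ where
  toFun c x := c.1 * x.1 0 + c.2 * x.1 1
  map_add' c c' := by ext x; simp only [Prod.fst_add, Prod.snd_add, Pi.add_apply]; ring
  map_smul' r c := by
    ext x
    simp only [Prod.smul_fst, Prod.smul_snd, smul_eq_mul, RingHom.id_apply, Pi.smul_apply]
    ring

theorem planeScore_apply (c : ℝ × ℝ) (x : UnitBall2) :
    planeScore c x = c.1 * x.1 0 + c.2 * x.1 1 := rfl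

theorem measurable_planeScore (c : ℝ × ℝ) : Measurable (planeScore c) := by
  have hcont : Continuous (planeScore c) := by
    simp only [funext (planeScore_apply c)]
    fun_prop
  exact hcont.measurable

theorem abs_planeScore_sub_le (c c' : ℝ × ℝ) (x : UnitBall2) :
    |planeScore c x - planeScore c' x| ≤ 2 * ‖c - c'‖ := by
  have hcoord : ∀ i, |x.1 i| ≤ 1 := fun i => (PiLp.norm_apply_le x.1 i).trans x.2
  rw [← Pi.sub_apply, ← map_sub, planeScore_apply, two_mul]
  calc |(c - c').1 * x.1 0 + (c - c').2 * x.1 1|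
      ≤ |(c - c').1| * |x.1 0| + |(c - c').2| * |x.1 1| := by
        rw [← abs_mul, ← abs_mul]
        exact abs_add_le _ _
    _ ≤ ‖c - c'‖ + ‖c - c'‖ := add_le_add
        ((mul_le_of_le_one_right (abs_nonneg _) (hcoord 0)).trans (norm_fst_le (c - c')))
        ((mul_le_of_le_one_right (abs_nonneg _) (hcoord 1)).trans (norm_snd_le (c - c')))

/-- The normal vectors of the lines that separate the positive from the negative examples of `T`. -/
def separatingDirections (T : Multiset (UnitBall2 × Bool)) : ConvexCone ℝ (ℝ × ℝ) :=
  (separatingCone T).comap planeScore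

theorem isOpen_separatingDirections (T : Multiset (UnitBall2 × Bool)) :
    IsOpen (separatingDirections T : Set (ℝ × ℝ)) :=
  (isOpen_separatingCone T).preimage planeScore.continuous_of_finiteDimensional

/-- The score function that `dyadicLearner` extracts from the training examples `T`. -/
noncomputable def dyadicScore (T : Multiset (UnitBall2 × Bool)) : UnitBall2 → ℝ :=
  planeScore (toPlane (coarsestDirection (separatingDirections T)))

open Classical in
/-- The learner of the theorem: it separates the training examples in a dyadic direction of the
coarsest possible level, and labels `1` exactly the points scoring at least as high as some positive
example. -/
noncomputable def dyadicLearner (T : Multiset (UnitBall2 × Bool)) (x : UnitBall2) : Bool :=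
  decide (∃ y, (y, true) ∈ T ∧ dyadicScore T y ≤ dyadicScore T x)

/-- The label `1` or `0` as a sign. -/
def labelSign (y : Bool) : ℝ := if y then 1 else -1

variable {T : Multiset (UnitBall2 × Bool)} {u : ℝ × ℝ} {β : ℝ} {k : ℕ} {x q : UnitBall2} {y : Bool}

theorem labelSign_mul_lt_of_dyadicLearner_ne (hsep : dyadicScore T ∈ separatingCone T)
    (hne : dyadicLearner T x ≠ y) (hq : (q, y) ∈ T) :
    labelSign y * dyadicScore T x < labelSign y * dyadicScore T q := by
  cases y
  · obtain ⟨p, hp, hle⟩ : ∃ p, (p, true) ∈ T ∧ dyadicScore T p ≤ dyadicScore T x := by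
      simpa [dyadicLearner] using hne
    simpa [labelSign] using (hsep p q hp hq).trans_le hle
  · have hnone : ∀ p, (p, true) ∈ T → dyadicScore T x < dyadicScore T p := by
      simpa [dyadicLearner] using hne
    simpa [labelSign] using hnone q hq

theorem eq_decide_nonneg_of_labelSign_mul_pos {t : ℝ} (ht : 0 < labelSign y * t) :
    y = decide (0 ≤ t) := by
  cases y
  · simpa [labelSign] using ht
  · simpa [labelSign] using ht.le

variable (hT : ∀ z ∈ T, z.2 = decide (0 ≤ planeScore u z.1 + β)) (hnorm : |u.1| + |u.2| = 1)

include hT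

theorem mem_separatingDirections_of_threshold : u ∈ separatingDirections T :=
  mem_separatingCone_of_threshold hT

include hnorm

theorem coarsestDirection_mem_of_threshold :
    coarsestDirection (separatingDirections T) ∈
      dyadicDirections (separatingDirections T) (coarsestLevel (separatingDirections T)) :=
  coarsestDirection_mem (exists_dyadicDirections_nonempty (isOpen_separatingDirections T)
    (mem_separatingDirections_of_threshold hT) hnorm)

theorem exists_dyadicScore_le_add_four (hk : coarsestLevel (separatingDirections T) = k + 1) :
    ∃ p n, (p, true) ∈ T ∧ (n, false) ∈ T ∧ dyadicScore T p ≤ dyadicScore T n + 4 := by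
  set d := coarsestDirection (separatingDirections T) with hd
  have hmem := coarsestDirection_mem_of_threshold hT hnorm
  rw [hk] at hmem
  have hstep : planeScore (toPlane (d + sphereStep d)) ∉ separatingCone T :=
    toPlane_add_sphereStep_notMem (dyadicDirections_eq_empty_of_lt (hk ▸ k.lt_succ_self)) hmem
  simp only [mem_separatingCone, not_forall, not_lt] at hstep
  obtain ⟨p, n, hp, hn, hle⟩ := hstep
  have hclose (z : UnitBall2) :
      |planeScore (toPlane (d + sphereStep d)) z - dyadicScore T z| ≤ 2 := by
    refine (abs_planeScore_sub_le _ _ z).trans ?_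
    rw [← map_sub, ← hd, add_sub_cancel_left]
    linarith [norm_toPlane_sphereStep_le d]
  refine ⟨p, n, hp, hn, ?_⟩
  linarith [(abs_le.1 (hclose p)).1, (abs_le.1 (hclose n)).2]

theorem abs_two_pow_mul_planeScore_sub_dyadicScore_le
    (hk : coarsestLevel (separatingDirections T) = k + 1) (z : UnitBall2) :
    |2 ^ (k + 1) * planeScore u z - dyadicScore T z| ≤ 2 := by
  have hmem := coarsestDirection_mem_of_threshold hT hnorm
  rw [hk] at hmem
  have hnear := norm_smul_sub_toPlane_lt_one (isOpen_separatingDirections T)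
    (dyadicDirections_eq_empty_of_lt (hk ▸ k.lt_succ_self)) hmem
    (mem_separatingDirections_of_threshold hT) hnorm
  have hbound := abs_planeScore_sub_le ((2 : ℝ) ^ (k + 1) • u)
    (toPlane (coarsestDirection (separatingDirections T))) z
  rw [map_smul, Pi.smul_apply, smul_eq_mul] at hbound
  exact hbound.trans (by linarith)

theorem two_pow_mul_margin_lt_eight (hk : coarsestLevel (separatingDirections T) = k + 1)
    (hy : y = decide (0 ≤ planeScore u x + β)) (hne : dyadicLearner T x ≠ y) :
    2 ^ (k + 1) * (labelSign y * (planeScore u x + β)) < 8 := by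
  have hsep : dyadicScore T ∈ separatingCone T := (coarsestDirection_mem_of_threshold hT hnorm).2
  obtain ⟨p, n, hp, hn, hpn⟩ := exists_dyadicScore_le_add_four hT hnorm hk
  have hclose := fun z => abs_le.1 (abs_two_pow_mul_planeScore_sub_dyadicScore_le hT hnorm hk z)
  have hp0 : 0 ≤ (2 : ℝ) ^ (k + 1) * (planeScore u p + β) :=
    mul_nonneg (by positivity) (by simpa using hT _ hp)
  have hn0 : (2 : ℝ) ^ (k + 1) * (planeScore u n + β) < 0 :=
    mul_neg_of_pos_of_neg (by positivity) (by simpa using hT _ hn)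
  cases y
  · have hlt := labelSign_mul_lt_of_dyadicLearner_ne hsep hne hn
    simp only [labelSign, Bool.false_eq_true, if_false] at hlt ⊢
    linarith [(hclose p).1, (hclose p).2, (hclose x).1, (hclose x).2]
  · have hlt := labelSign_mul_lt_of_dyadicLearner_ne hsep hne hp
    simp only [labelSign, if_true] at hlt ⊢
    linarith [(hclose n).1, (hclose n).2, (hclose x).1, (hclose x).2]

end DyadicLearner

theorem errorsUndercut_dyadicLearner {u : ℝ × ℝ} {β μ : ℝ} {K : ℕ} {p : UnitBall2 × Bool}
    (hnorm : |u.1| + |u.2| = 1) (hμ : 0 < μ) (hK : 8 ≤ 2 ^ (K + 1) * μ)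
    (hp : μ ≤ labelSign p.2 * (planeScore u p.1 + β)) :
    ErrorsUndercut dyadicLearner (fun x => decide (0 ≤ planeScore u x + β))
      (candidates u K ×ˢ Finset.univ) (fun c => {z | z.2 = c.2})
      (fun c z => labelSign c.2 * planeScore (toPlane c.1) z.1) p := by
  have hlabel := eq_decide_nonneg_of_labelSign_mul_pos (hμ.trans_le hp)
  intro T hT hne
  have hwrong : dyadicLearner T p.1 ≠ p.2 := fun h => hne (h.trans hlabel)
  have hlevel : coarsestLevel (separatingDirections T) ≤ K := by
    by_contra! hlt
    obtain ⟨k, hk⟩ := Nat.exists_eq_succ_of_ne_zero (Nat.ne_zero_of_lt hlt)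
    have hpow : (2 : ℝ) ^ (K + 1) ≤ 2 ^ (k + 1) := pow_le_pow_right₀ one_le_two (by omega)
    have hupper := two_pow_mul_margin_lt_eight hT hnorm hk hlabel hwrong
    have hlower :
        (2 : ℝ) ^ (K + 1) * μ ≤ 2 ^ (k + 1) * (labelSign p.2 * (planeScore u p.1 + β)) := by
      gcongr
    linarith
  refine ⟨(coarsestDirection (separatingDirections T), p.2), Finset.mem_product.2
    ⟨coarsestDirection_mem_candidates (isOpen_separatingDirections T)
      (mem_separatingDirections_of_threshold hT) hnorm hlevel, Finset.mem_univ _⟩, rfl, ?_⟩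
  rintro ⟨q, y⟩ hq rfl
  exact labelSign_mul_lt_of_dyadicLearner_ne (coarsestDirection_mem_of_threshold hT hnorm).2 hwrong
    hq

section SampleComplexity

theorem mul_exp_neg_le {N ε δ t : ℝ} (hN : 0 < N) (hε : 0 < ε) (hδ : 0 < δ)
    (ht : N / ε * Real.log (N / δ) ≤ t) : N * Real.exp (-(ε / N * t)) ≤ δ := by
  have hlog : Real.log (N / δ) ≤ ε / N * t :=
    calc Real.log (N / δ) = ε / N * (N / ε * Real.log (N / δ)) := by field_simp
      _ ≤ ε / N * t := by gcongr
  calc N * Real.exp (-(ε / N * t)) ≤ N * Real.exp (-Real.log (N / δ)) := by gcongr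
    _ = δ := by
      rw [Real.exp_neg, Real.exp_log (by positivity)]
      field_simp

theorem log_le_mul_logb_two {x : ℝ} (hx : 1 ≤ x) : Real.log x ≤ 7 / 10 * Real.logb 2 x := by
  have hlog : Real.log x = Real.log 2 * Real.logb 2 x :=
    (mul_div_cancel₀ _ (Real.log_pos one_lt_two).ne').symm
  rw [hlog]
  exact mul_le_mul_of_nonneg_right (by linarith [Real.log_two_lt_d9])
    (Real.logb_nonneg one_lt_two hx)

theorem le_two_pow_floor_logb_add_one {x : ℝ} (hx : 0 < x) : x ≤ 2 ^ (⌊Real.logb 2 x⌋₊ + 1) := by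
  have hlt : Real.logb 2 x < ((⌊Real.logb 2 x⌋₊ + 1 : ℕ) : ℝ) := by
    exact_mod_cast Nat.lt_floor_add_one _
  rw [Real.logb_lt_iff_lt_rpow one_lt_two hx, Real.rpow_natCast] at hlt
  exact hlt.le

theorem five_le_logb_two_div {γ : ℝ} (hγ : 0 < γ) (hγ2 : γ ≤ 2) : 5 ≤ Real.logb 2 (64 / γ) := by
  rw [Real.le_logb_iff_rpow_le one_lt_two (by positivity), le_div_iff₀ hγ]
  norm_num
  linarith

theorem ten_mul_div_mul_log_le {L ε δ : ℝ} (hL : 1 ≤ L) (hε : 0 < ε) (hε1 : ε ≤ 1) (hδ : 0 < δ)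
    (hδ1 : δ ≤ 1) : 10 * L / ε * Real.log (10 * L / δ) ≤
      48 * L / ε * Real.logb 2 (26 * L / ε) + 8 * L / ε * Real.logb 2 (2 / δ) := by
  have hbase : 1 ≤ 26 * L / ε := (one_le_div hε).2 (by linarith)
  have hconf : 1 ≤ 2 / δ := (one_le_div hδ).2 (by linarith)
  have hlogL : Real.log (5 * L) ≤ 7 / 10 * Real.logb 2 (26 * L / ε) := by
    refine (Real.log_le_log (by positivity) ?_).trans (log_le_mul_logb_two hbase)
    rw [le_div_iff₀ hε]
    nlinarith
  have hlog : Real.log (10 * L / δ) ≤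
      7 / 10 * Real.logb 2 (26 * L / ε) + 7 / 10 * Real.logb 2 (2 / δ) := by
    have hsplit : 10 * L / δ = 5 * L * (2 / δ) := by ring
    rw [hsplit, Real.log_mul (by positivity) (by positivity)]
    exact add_le_add hlogL (log_le_mul_logb_two hconf)
  have hlogb_base := Real.logb_nonneg one_lt_two hbase
  have hlogb_conf := Real.logb_nonneg one_lt_two hconf
  calc 10 * L / ε * Real.log (10 * L / δ)
      ≤ 10 * L / ε * (7 / 10 * Real.logb 2 (26 * L / ε) + 7 / 10 * Real.logb 2 (2 / δ)) := by gcongr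
    _ = 7 * L / ε * Real.logb 2 (26 * L / ε) + 7 * L / ε * Real.logb 2 (2 / δ) := by ring
    _ ≤ _ := by gcongr <;> norm_num

theorem ofReal_one_sub_le_samples_atkDet_dyadicLearner_le {D : Measure (UnitBall2 × Bool)}
    [IsProbabilityMeasure D] {u : ℝ × ℝ} (hnorm : |u.1| + |u.2| = 1) {β μ : ℝ} (hμ : 0 < μ)
    (hmargin : ∀ᵐ p ∂D, μ ≤ labelSign p.2 * (planeScore u p.1 + β)) {K : ℕ}
    (hK : 8 ≤ 2 ^ (K + 1) * μ) {N ε δ : ℝ} (hN : 8 * (K + 1) ≤ N) (hε : 0 < ε) (hδ : 0 < δ) {m : ℕ}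
    (hm : N / ε * Real.log (N / δ) ≤ m) :
    ENNReal.ofReal (1 - δ) ≤ samples D m {f | atkDet D (fun x => decide (0 ≤ planeScore u x + β))
      (toTrain f) dyadicLearner ≤ ENNReal.ofReal ε} := by
  have hN0 : 0 < N := lt_of_lt_of_le (by positivity) hN
  have hcard : ((candidates u K ×ˢ (Finset.univ : Finset Bool)).card : ℝ) ≤ N := by
    have hcandidates : ((candidates u K).card : ℝ) ≤ 4 * (K + 1) := by
      exact_mod_cast card_candidates_le u K
    rw [Finset.card_product, Finset.card_univ, Fintype.card_bool]
    push_cast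
    linarith
  have hlearn := ofReal_one_sub_le_samples_atkDet_le (r := ε / N)
    (hmargin.mono fun p hp => eq_decide_nonneg_of_labelSign_mul_pos (hμ.trans_le hp))
    (hmargin.mono fun p hp => errorsUndercut_dyadicLearner hnorm hμ hK hp)
    (fun c _ => measurableSet_eq_fun measurable_snd measurable_const)
    (fun c _ => ((measurable_planeScore _).comp measurable_fst).const_mul _) (by positivity) m
  calc ENNReal.ofReal (1 - δ) ≤ _ := ENNReal.ofReal_le_ofReal (sub_le_sub_left
        ((mul_le_mul_of_nonneg_right hcard (Real.exp_nonneg _)).trans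
          (mul_exp_neg_le hN0 hε hδ hm)) 1)
    _ ≤ _ := hlearn
    _ ≤ _ := measure_mono fun f hf => le_trans hf (ENNReal.ofReal_le_ofReal
        ((mul_le_mul_of_nonneg_right hcard (by positivity)).trans_eq (mul_div_cancel₀ ε hN0.ne')))

end SampleComplexity

section Normalization

theorem ae_mem_msupport {α : Type*} [TopologicalSpace α] [HereditarilyLindelofSpace α]
    [MeasurableSpace α] (D : Measure α) : ∀ᵐ p ∂D, p ∈ msupport D := by
  filter_upwards [Measure.support_mem_ae] with p hp U hU hpU
  exact (Measure.mem_support_iff_forall p).1 hp U (hU.mem_nhds hpU)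

theorem exists_inner_eq_mul_planeScore {w : EuclideanSpace ℝ (Fin 2)} (hw : w ≠ 0) :
    ∃ s : ℝ, ∃ u : ℝ × ℝ, 0 < s ∧ s ≤ 2 * ‖w‖ ∧ |u.1| + |u.2| = 1 ∧
      ∀ x : UnitBall2, ⟪w, x.1⟫ = s * planeScore u x := by
  have hs : 0 < |w 0| + |w 1| := by
    by_contra! hle
    refine hw (PiLp.ext fun i => ?_)
    fin_cases i
    · exact abs_nonpos_iff.1 (show |w 0| ≤ 0 by linarith [abs_nonneg (w 1)])
    · exact abs_nonpos_iff.1 (show |w 1| ≤ 0 by linarith [abs_nonneg (w 0)])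
  refine ⟨|w 0| + |w 1|, (w 0 / (|w 0| + |w 1|), w 1 / (|w 0| + |w 1|)), hs, ?_, ?_, fun x => ?_⟩
  · rw [two_mul]
    exact add_le_add (PiLp.norm_apply_le w 0) (PiLp.norm_apply_le w 1)
  · rw [abs_div, abs_div, abs_of_pos hs, ← add_div, div_self hs.ne']
  · rw [planeScore_apply, PiLp.inner_apply, Fin.sum_univ_two, Real.inner_apply, Real.inner_apply]
    field_simp

end Normalization

/-- A single algorithm robustly learns `2`-dimensional linear classifiers with margin `γ` using
`(48 log₂(64/γ)/ε) log₂(26 log₂(64/γ)/ε) + (8 log₂(64/γ)/ε) log₂(2/δ)` samples,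
simultaneously for every `γ ∈ (0,2]`. -/
theorem stmt4 :
    ∃ A : Multiset (UnitBall2 × Bool) → UnitBall2 → Bool,
      ∀ γ : ℝ, 0 < γ → γ ≤ 2 →
      ∀ ε δ : ℝ, 0 < ε → ε < 1 → 0 < δ → δ < 1 →
      ∀ (w : EuclideanSpace ℝ (Fin 2)) (b : ℝ), w ≠ 0 →
      ∀ D : Measure (UnitBall2 × Bool), IsProbabilityMeasure D →
        D {p : UnitBall2 × Bool | p.2 = decide (0 ≤ ⟪w, p.1.1⟫ + b)} = 1 →
        (∀ p ∈ msupport D,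
          γ * ‖w‖ / 2 ≤ (if p.2 then (1 : ℝ) else -1) * (⟪w, p.1.1⟫ + b)) →
        ∀ m : ℕ,
          48 * Real.logb 2 (64 / γ) / ε * Real.logb 2 (26 * Real.logb 2 (64 / γ) / ε) +
              8 * Real.logb 2 (64 / γ) / ε * Real.logb 2 (2 / δ) ≤ (m : ℝ) →
          ENNReal.ofReal (1 - δ) ≤
            samples D m {f | atkDet D (fun x => decide (0 ≤ ⟪w, x.1⟫ + b)) (toTrain f) A ≤
              ENNReal.ofReal ε} := by
  refine ⟨dyadicLearner, fun γ hγ hγ2 ε δ hε hε1 hδ hδ1 w b hw D _ _ hmargin m hm => ?_⟩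
  obtain ⟨s, u, hs, hsw, hnorm, hinner⟩ := exists_inner_eq_mul_planeScore hw
  have hscale : ∀ x : UnitBall2, ⟪w, x.1⟫ + b = s * (planeScore u x + b / s) := fun x => by
    rw [hinner, mul_add, mul_div_cancel₀ b hs.ne']
  simp only [hscale, mul_nonneg_iff_of_pos_left hs] at hmargin ⊢
  have hmargin_ae : ∀ᵐ p ∂D, γ / 4 ≤ labelSign p.2 * (planeScore u p.1 + b / s) := by
    filter_upwards [ae_mem_msupport D] with p hp
    have hlower : s * (γ / 4) ≤ γ * ‖w‖ / 2 := by nlinarith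
    have hp_margin := hlower.trans (hmargin p hp)
    rw [mul_left_comm] at hp_margin
    exact le_of_mul_le_mul_left hp_margin hs
  have hL := five_le_logb_two_div hγ hγ2
  have hK : 8 ≤ 2 ^ (⌊Real.logb 2 (64 / γ)⌋₊ + 1) * (γ / 4) := by
    have hpow := (div_le_iff₀ hγ).1 (le_two_pow_floor_logb_add_one (x := 64 / γ) (by positivity))
    linarith
  have hN : 8 * (⌊Real.logb 2 (64 / γ)⌋₊ + 1 : ℝ) ≤ 10 * Real.logb 2 (64 / γ) := by
    linarith [Nat.floor_le (show 0 ≤ Real.logb 2 (64 / γ) by linarith)]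
  exact ofReal_one_sub_le_samples_atkDet_dyadicLearner_le hnorm (by positivity) hmargin_ae hK hN hε
    hδ ((ten_mul_div_mul_log_le (by linarith) hε hε1.le hδ hδ1.le).trans hm)
end

section
/- Let n > 256 and X = {x ∈ ℝⁿ : ‖x‖ ≤ 9/8}. For every ε ∈ (0, 1/16] and every (possibly randomized) learning algorithm A, there exist a linear target h* = (x ↦ 1[⟨w*,x⟩ + b* ≥ 0]) and a distribution D over D_{h*} with margin γ = 1/8 such that E_{S_trn~D^m}[ atk_D(h*, S_trn, A) ] > ε whenever m ≤ e^{(n−1)/128}/(192ε). -/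
open MeasureTheory ENNReal RealInnerProductSpace

/-- The clean-label attackable rate of a randomized learner `a` with seed distribution `μ`. -/
noncomputable def atkRand {X : Type*} [MeasurableSpace X] {Ω : Type*} [MeasurableSpace Ω]
    (D : Measure (X × Bool)) (μ : Measure Ω) (h : X → Bool)
    (S : Multiset (X × Bool)) (a : Multiset (X × Bool) → Ω → X → Bool) : ℝ≥0∞ :=
  ⨆ Adv : {f : X → Multiset (X × Bool) // ∀ x : X, ∀ p ∈ f x, p.2 = h p.1},
    (D.prod μ) {q : (X × Bool) × Ω | a (S + Adv.1 q.1.1) q.2 q.1.1 ≠ h q.1.1}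

/-- The closed ball of radius `9/8` in `ℝⁿ`, as an instance space. -/
abbrev Ball98 (n : ℕ) : Type := {x : EuclideanSpace ℝ (Fin n) // ‖x‖ ≤ 9 / 8}

/-!
Fix a family of sets `A` of `s ≈ n / 12` coordinates that rarely meet in more than a third of
their elements, obtained by counting words that agree in many letters. A halfspace with a random
sign pattern `σ` classifies the two points `± σ|_A / √s` of every `A`. Flipping `σ` on `A`
exchanges the labels of the two points of `A`, while a point of `B` built from the flipped pattern
keeps its label under the old halfspace as soon as `3 |A ∩ B| < s`. So an attacker who is asked
about a point of `A` may add the sample that the flipped halfspace would have produced. The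
learner then sees the same training set under both halfspaces, and errs on average on one of the
two points. Mass `4 ε` on these points yields expected error at least `2 ε` times the probability
that the `m` draws avoid the sets that meet `A` in at least a third of their elements.
-/

section Discrete

variable {I α : Type*} [MeasurableSpace I] [MeasurableSpace α]

lemma lintegral_map_of_finite [Finite I] [MeasurableSingletonClass I] [MeasurableSingletonClass α]
    (ρ : Measure I) (e : I → α) (F : α → ℝ≥0∞) :
    ∫⁻ x, F x ∂ρ.map e = ∫⁻ i, F (e i) ∂ρ := by
  cases nonempty_fintype I
  have he : Measurable e := .of_discrete
  have hmap : ρ.map e = ∑ i, ρ {i} • Measure.dirac (e i) := by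
    conv_lhs => rw [← Measure.sum_smul_dirac ρ, Measure.map_sum he.aemeasurable]
    simp [Measure.sum_fintype, Measure.map_smul]
  rw [hmap, lintegral_finsetSum_measure, lintegral_fintype]
  simp only [lintegral_smul_measure, lintegral_dirac, smul_eq_mul, mul_comm]

lemma lintegral_samples_map [Finite I] [MeasurableSingletonClass I] [MeasurableSingletonClass α]
    (ρ : Measure I) [IsProbabilityMeasure ρ] (e : I → α) (m : ℕ) (F : (Fin m → α) → ℝ≥0∞) :
    ∫⁻ f, F f ∂samples (ρ.map e) m = ∫⁻ ι, F (e ∘ ι) ∂samples ρ m := by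
  have he : Measurable e := .of_discrete
  have := Measure.isProbabilityMeasure_map (μ := ρ) he.aemeasurable
  have hmap : samples (ρ.map e) m = (samples ρ m).map (e ∘ ·) :=
    (Measure.pi_map_pi fun _ => he.aemeasurable).symm
  rw [hmap, lintegral_map_of_finite]

lemma measurePreserving_tail_samples (D : Measure α) [IsProbabilityMeasure D] (m : ℕ) :
    MeasurePreserving Fin.tail (samples D (m + 1)) (samples D m) :=
  measurePreserving_snd.comp (measurePreserving_piFinSuccAbove (fun _ => D) 0)

lemma one_sub_le_samples_pi (D : Measure α) [IsProbabilityMeasure D] {s : Set α}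
    (hs : MeasurableSet s) (m : ℕ) :
    1 - m * D sᶜ ≤ samples D m (Set.univ.pi fun _ => s) := by
  have : IsProbabilityMeasure (samples D m) := by unfold samples; infer_instance
  have hcompl : (Set.univ.pi fun _ : Fin m => s)ᶜ = ⋃ j, Function.eval j ⁻¹' sᶜ := by
    ext f; simp
  have hpre : ∀ j, samples D m (Function.eval j ⁻¹' sᶜ) = D sᶜ := fun j =>
    (measurePreserving_eval (fun _ => D) j).measure_preimage hs.compl.nullMeasurableSet
  have hmiss : samples D m (Set.univ.pi fun _ => s)ᶜ ≤ m * D sᶜ := calc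
    _ ≤ ∑ j : Fin m, samples D m (Function.eval j ⁻¹' sᶜ) := by
      rw [hcompl]; exact measure_iUnion_fintype_le _ _
    _ = m * D sᶜ := by
      simp only [hpre, Finset.sum_const, Finset.card_univ, Fintype.card_fin, nsmul_eq_mul]
  rw [tsub_le_iff_right, ← prob_add_prob_compl (μ := samples D m)
    (MeasurableSet.univ_pi fun _ : Fin m => hs)]
  gcongr

end Discrete

lemma lintegral_le_prod_apply {α Ω : Type*} [MeasurableSpace α] [MeasurableSpace Ω]
    (D : Measure α) (μ : Measure Ω) [SFinite μ] (s : Set (α × Ω)) :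
    ∫⁻ x, μ (Prod.mk x ⁻¹' s) ∂D ≤ D.prod μ s := calc
  _ ≤ ∫⁻ x, μ (Prod.mk x ⁻¹' toMeasurable (D.prod μ) s) ∂D := by
    gcongr; exact subset_toMeasurable _ _
  _ = D.prod μ s := by
    rw [← Measure.prod_apply (measurableSet_toMeasurable _ _), measure_toMeasurable]

lemma msupport_map_subset_range {I α : Type*} [Finite I] [MeasurableSpace I]
    [MeasurableSingletonClass I] [TopologicalSpace α] [T1Space α] [MeasurableSpace α]
    [MeasurableSingletonClass α] (ρ : Measure I) (e : I → α) :
    msupport (ρ.map e) ⊆ Set.range e := by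
  intro p hp
  by_contra hpe
  refine (hp (Set.range e)ᶜ (Set.finite_range e).isClosed.isOpen_compl hpe).ne' ?_
  rw [Measure.map_apply .of_discrete (Set.finite_range e).measurableSet.compl]
  simp

section AttackRate

variable {X Ω : Type*} [MeasurableSpace X] [MeasurableSpace Ω]

lemma atkRand_add_le (D : Measure (X × Bool)) (μ : Measure Ω) {h : X → Bool}
    (S : Multiset (X × Bool)) {T : Multiset (X × Bool)} (hT : ∀ p ∈ T, p.2 = h p.1)
    (a : Multiset (X × Bool) → Ω → X → Bool) :
    atkRand D μ h (S + T) a ≤ atkRand D μ h S a := by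
  refine iSup_le fun Adv => le_iSup_of_le ⟨fun x => T + Adv.1 x, fun x p hp => ?_⟩ ?_
  · exact (Multiset.mem_add.1 hp).elim (hT p) (Adv.2 x p)
  · simp only [add_assoc, le_refl]

/-- The expected attackable rate `E_{S ~ D^m}[atk_D(h, S, a)]` of the learner `a`. -/
noncomputable def expectedAtk (D : Measure (X × Bool)) (μ : Measure Ω) (h : X → Bool)
    (a : Multiset (X × Bool) → Ω → X → Bool) (m : ℕ) : ℝ≥0∞ :=
  ∫⁻ f, atkRand D μ h (toTrain f) a ∂samples D m

lemma toTrain_succ {α : Type*} {m : ℕ} (f : Fin (m + 1) → α) :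
    toTrain f = toTrain (Fin.tail f) + {f 0} := by
  rw [add_comm (toTrain _), Multiset.singleton_add, toTrain, List.ofFn_succ, ← Multiset.cons_coe]
  rfl

lemma antitone_expectedAtk [MeasurableSingletonClass X] {I : Type*} [Finite I] [MeasurableSpace I]
    [MeasurableSingletonClass I] (ρ : Measure I) [IsProbabilityMeasure ρ] {e : I → X × Bool}
    {h : X → Bool} (he : ∀ i, (e i).2 = h (e i).1) (μ : Measure Ω)
    (a : Multiset (X × Bool) → Ω → X → Bool) :
    Antitone (expectedAtk (ρ.map e) μ h a) := by
  refine antitone_nat_of_succ_le fun m => ?_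
  simp only [expectedAtk, lintegral_samples_map]
  calc ∫⁻ ι, atkRand (ρ.map e) μ h (toTrain (e ∘ ι)) a ∂samples ρ (m + 1)
      ≤ ∫⁻ ι, atkRand (ρ.map e) μ h (toTrain (e ∘ Fin.tail ι)) a ∂samples ρ (m + 1) := by
        refine lintegral_mono fun ι => ?_
        rw [toTrain_succ]
        exact atkRand_add_le _ _ _ (by simpa using he (ι 0)) a
    _ = ∫⁻ ι, atkRand (ρ.map e) μ h (toTrain (e ∘ ι)) a ∂samples ρ m :=
        (measurePreserving_tail_samples ρ m).lintegral_comp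
          (f := fun ι => atkRand (ρ.map e) μ h (toTrain (e ∘ ι)) a) .of_discrete

lemma lintegral_le_atkRand [MeasurableSingletonClass X] {I : Type*} [Finite I] [MeasurableSpace I]
    [MeasurableSingletonClass I] (ρ : Measure I) (e : I → X × Bool) (μ : Measure Ω) [SFinite μ]
    {h : X → Bool} (S : Multiset (X × Bool)) {adv : X → Multiset (X × Bool)}
    (hadv : ∀ x, ∀ p ∈ adv x, p.2 = h p.1) (a : Multiset (X × Bool) → Ω → X → Bool) :
    ∫⁻ i, μ {ω | a (S + adv (e i).1) ω (e i).1 ≠ h (e i).1} ∂ρ ≤ atkRand (ρ.map e) μ h S a := by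
  refine le_iSup_of_le ⟨adv, hadv⟩ ?_
  rw [← lintegral_map_of_finite ρ e fun p => μ {ω | a (S + adv p.1) ω p.1 ≠ h p.1}]
  exact lintegral_le_prod_apply _ μ _

end AttackRate

local instance optionMeasurableSpace {J : Type*} : MeasurableSpace (Option J) := ⊤

local instance option_discreteMeasurableSpace {J : Type*} : DiscreteMeasurableSpace (Option J) :=
  ⟨fun _ => trivial⟩

section MixedUniform

variable {J : Type*} [Fintype J]

/-- The distribution that draws a uniform element of `J` with probability `δ`, and `none`
otherwise. -/
noncomputable def mixedUniform (J : Type*) [Fintype J] (δ : ℝ≥0∞) : Measure (Option J) :=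
  (1 - δ) • Measure.dirac none + (δ / Fintype.card J) • ∑ z, Measure.dirac (some z)

lemma lintegral_mixedUniform (δ : ℝ≥0∞) (F : Option J → ℝ≥0∞) :
    ∫⁻ i, F i ∂mixedUniform J δ = (1 - δ) * F none + δ / Fintype.card J * ∑ z, F (some z) := by
  simp [mixedUniform, lintegral_add_measure, lintegral_smul_measure, lintegral_finsetSum_measure]

lemma isProbabilityMeasure_mixedUniform [Nonempty J] {δ : ℝ≥0∞} (hδ : δ ≤ 1) :
    IsProbabilityMeasure (mixedUniform J δ) where
  measure_univ := by
    have hJ : (Fintype.card J : ℝ≥0∞) ≠ 0 := by simp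
    rw [← lintegral_one, lintegral_mixedUniform]
    simp [ENNReal.div_mul_cancel hJ, tsub_add_cancel_of_le hδ]

end MixedUniform

/-! ### The swap attack -/

/-- A family of targets `target θ`, each with a common point `base` and one point `point θ A y` of
label `y` for every `A : G` and `y : Bool`. The involution `swap A` of the index set exchanges the
labels of the two points of `A`, and the new points at `B ∉ near A` are still labelled correctly
by the old target. -/
structure SwapFamily (X Θ G : Type*) where
  target : Θ → X → Bool
  base : X
  point : Θ → G → Bool → X
  swap : G → Θ → Θ
  near : G → Finset G
  target_base : ∀ θ, target θ base = true
  target_point : ∀ θ A y, target θ (point θ A y) = y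
  eq_of_point_eq_point : ∀ {θ A A' y y'}, point θ A y = point θ A' y' → A = A'
  swap_involutive : ∀ A, Function.Involutive (swap A)
  point_swap : ∀ θ A y, point (swap A θ) A y = point θ A !y
  target_point_swap : ∀ θ {A B} y, B ∉ near A → target θ (point (swap A θ) B y) = y

namespace SwapFamily

variable {X Θ G Ω : Type*} (F : SwapFamily X Θ G)

/-- The labelled example of `target θ` encoded by a draw: `none` stands for the base point. -/
def draw (θ : Θ) : Option (G × Bool) → X × Bool
  | none => (F.base, true)
  | some z => (F.point θ z.1 z.2, z.2)

lemma target_draw (θ : Θ) (i : Option (G × Bool)) :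
    (F.draw θ i).2 = F.target θ (F.draw θ i).1 := by
  cases i with
  | none => exact (F.target_base θ).symm
  | some z => exact (F.target_point θ z.1 z.2).symm

/-- The draws whose example for `target (swap A θ)` is also labelled correctly by `target θ`. -/
def farDraws (A : G) : Set (Option (G × Bool)) := {i | ∀ z ∈ i, z.1 ∉ F.near A}

lemma target_draw_swap (θ : Θ) {A : G} {i : Option (G × Bool)} (hi : i ∈ F.farDraws A) :
    (F.draw (F.swap A θ) i).2 = F.target θ (F.draw (F.swap A θ) i).1 := by
  cases i with
  | none => exact (F.target_base θ).symm
  | some z => exact (F.target_point_swap θ z.2 (hi z rfl)).symm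

open Classical in
/-- The attacker that, asked about a point of `A`, adds the training set that the swapped target
`target (swap A θ)` would have produced from the same draws. -/
noncomputable def swapAttack {m : ℕ} (θ : Θ) (ι : Fin m → Option (G × Bool)) (x : X) :
    Multiset (X × Bool) :=
  if h : ∃ A, (∃ y, x = F.point θ A y) ∧ ∀ j, ι j ∈ F.farDraws A then
    toTrain (F.draw (F.swap h.choose θ) ∘ ι)
  else 0

lemma swapAttack_clean {m : ℕ} (θ : Θ) (ι : Fin m → Option (G × Bool)) (x : X)
    (p : X × Bool) (hp : p ∈ F.swapAttack θ ι x) : p.2 = F.target θ p.1 := by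
  unfold swapAttack at hp
  split_ifs at hp with h
  · obtain ⟨j, rfl⟩ := (List.mem_ofFn' _ _).1 (Multiset.mem_coe.1 hp)
    exact F.target_draw_swap θ (h.choose_spec.2 j)
  · exact absurd hp (Multiset.notMem_zero p)

lemma swapAttack_point {m : ℕ} (θ : Θ) {ι : Fin m → Option (G × Bool)} {A : G}
    (hι : ∀ j, ι j ∈ F.farDraws A) (y : Bool) :
    F.swapAttack θ ι (F.point θ A y) = toTrain (F.draw (F.swap A θ) ∘ ι) := by
  have h : ∃ B, (∃ z, F.point θ A y = F.point θ B z) ∧ ∀ j, ι j ∈ F.farDraws B :=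
    ⟨A, ⟨y, rfl⟩, hι⟩
  obtain ⟨z, hz⟩ := h.choose_spec.1
  rw [swapAttack, dif_pos h, ← F.eq_of_point_eq_point hz]

variable [MeasurableSpace Ω] (μ : Measure Ω) (a : Multiset (X × Bool) → Ω → X → Bool)

/-- The training set `S` of `target θ` together with the poison that `swapAttack` adds at the points
of `A`. -/
def poisonedSample {m : ℕ} (θ : Θ) (A : G) (ι : Fin m → Option (G × Bool)) :
    Multiset (X × Bool) :=
  toTrain (F.draw θ ∘ ι) + toTrain (F.draw (F.swap A θ) ∘ ι)

lemma poisonedSample_swap {m : ℕ} (θ : Θ) (A : G) (ι : Fin m → Option (G × Bool)) :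
    F.poisonedSample (F.swap A θ) A ι = F.poisonedSample θ A ι := by
  rw [poisonedSample, F.swap_involutive A θ, add_comm, poisonedSample]

/-- The expected number of points of `A` that the learner mislabels when trained on `T`, if the
target is `target θ`. -/
noncomputable def pairError (θ : Θ) (A : G) (T : Multiset (X × Bool)) : ℝ≥0∞ :=
  ∑ y, μ {ω | a T ω (F.point θ A y) ≠ y}

lemma two_le_pairError_add_pairError_swap [IsProbabilityMeasure μ] (θ : Θ) (A : G)
    (T : Multiset (X × Bool)) :
    2 ≤ F.pairError μ a θ A T + F.pairError μ a (F.swap A θ) A T := by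
  have hone (x : X) (y : Bool) : 1 ≤ μ {ω | a T ω x ≠ y} + μ {ω | a T ω x ≠ !y} := by
    have hcover : {ω | a T ω x ≠ y} ∪ {ω | a T ω x ≠ !y} = Set.univ := by
      ext ω; cases y <;> cases h : a T ω x <;> simp [h]
    rw [← measure_univ (μ := μ), ← hcover]
    exact measure_union_le _ _
  calc (2 : ℝ≥0∞) = ∑ _y : Bool, 1 := by simp
    _ ≤ ∑ y, (μ {ω | a T ω (F.point θ A y) ≠ y} + μ {ω | a T ω (F.point θ A y) ≠ !y}) :=
      Finset.sum_le_sum fun y _ => hone _ y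
    _ = F.pairError μ a θ A T + F.pairError μ a (F.swap A θ) A T := by
      simp only [pairError, point_swap, Fintype.sum_bool, Bool.not_true, Bool.not_false]
      abel

lemma card_le_sum_pairError [Fintype Θ] [IsProbabilityMeasure μ] (A : G) {m : ℕ}
    (ι : Fin m → Option (G × Bool)) :
    (Fintype.card Θ : ℝ≥0∞) ≤ ∑ θ, F.pairError μ a θ A (F.poisonedSample θ A ι) := by
  have hswap : ∑ θ, F.pairError μ a (F.swap A θ) A (F.poisonedSample θ A ι) =
      ∑ θ, F.pairError μ a θ A (F.poisonedSample θ A ι) := by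
    rw [← Equiv.sum_comp (F.swap_involutive A).toPerm]
    simp only [Function.Involutive.coe_toPerm, F.swap_involutive A _, poisonedSample_swap]
  refine (ENNReal.mul_le_mul_iff_right two_ne_zero ofNat_ne_top).1 ?_
  calc 2 * (Fintype.card Θ : ℝ≥0∞) = ∑ _θ : Θ, 2 := by simp [mul_comm]
    _ ≤ ∑ θ, (F.pairError μ a θ A (F.poisonedSample θ A ι) +
          F.pairError μ a (F.swap A θ) A (F.poisonedSample θ A ι)) :=
      Finset.sum_le_sum fun θ _ => F.two_le_pairError_add_pairError_swap μ a θ A _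
    _ = 2 * ∑ θ, F.pairError μ a θ A (F.poisonedSample θ A ι) := by
      rw [Finset.sum_add_distrib, hswap, two_mul]

lemma card_mul_le_sum_setLIntegral_pairError [Finite G] [Fintype Θ] [IsProbabilityMeasure μ]
    (A : G) {m : ℕ} (P : Measure (Fin m → Option (G × Bool)))
    (s : Set (Fin m → Option (G × Bool))) :
    Fintype.card Θ * P s ≤
      ∑ θ, ∫⁻ ι in s, F.pairError μ a θ A (F.poisonedSample θ A ι) ∂P := calc
  _ = ∫⁻ _ι in s, (Fintype.card Θ : ℝ≥0∞) ∂P := (setLIntegral_const _ _).symm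
  _ ≤ ∫⁻ ι in s, ∑ θ, F.pairError μ a θ A (F.poisonedSample θ A ι) ∂P :=
    lintegral_mono fun ι => F.card_le_sum_pairError μ a A ι
  _ = _ := lintegral_finsetSum _ fun _ _ => .of_discrete

variable [Fintype G]

lemma mixedUniform_compl_farDraws_le [Nonempty G] {q : ℝ≥0∞} {A : G}
    (hq : (F.near A).card ≤ q * Fintype.card G) (δ : ℝ≥0∞) :
    mixedUniform (G × Bool) δ (F.farDraws A)ᶜ ≤ δ * q := by
  classical
  have hsome (z : G × Bool) : (F.farDraws A)ᶜ.indicator (1 : Option (G × Bool) → ℝ≥0∞) (some z) =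
      if z.1 ∈ F.near A then 1 else 0 := by
    simp only [Set.indicator_apply, farDraws, Set.mem_compl_iff, Set.mem_ofPred_eq,
      Option.mem_some_iff, forall_eq', not_not, Pi.one_apply]
  have hnone : (F.farDraws A)ᶜ.indicator (1 : Option (G × Bool) → ℝ≥0∞) none = 0 :=
    Set.indicator_of_notMem (by simp [farDraws]) _
  rw [← lintegral_indicator_one .of_discrete, lintegral_mixedUniform, hnone, mul_zero, zero_add]
  calc δ / Fintype.card (G × Bool) * ∑ z, (F.farDraws A)ᶜ.indicator 1 (some z)
      = δ / Fintype.card (G × Bool) * (2 * (F.near A).card) := by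
        simp only [hsome, Fintype.sum_prod_type_right, Finset.sum_ite_mem, Finset.univ_inter]
        simp
    _ ≤ δ / Fintype.card (G × Bool) * (2 * (q * Fintype.card G)) := by gcongr
    _ = δ / Fintype.card (G × Bool) * Fintype.card (G × Bool) * q := by
        simp only [Fintype.card_prod, Fintype.card_bool, Nat.cast_mul, Nat.cast_ofNat]; ring
    _ = δ * q := by rw [ENNReal.div_mul_cancel (by simp) (natCast_ne_top _)]

variable [MeasurableSpace X]

/-- The distribution over the examples of `target θ` that puts mass `1 - δ` on the base point and
spreads mass `δ` uniformly over the points of all `A : G`. -/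
noncomputable def distribution (δ : ℝ≥0∞) (θ : Θ) : Measure (X × Bool) :=
  (mixedUniform (G × Bool) δ).map (F.draw θ)

lemma isProbabilityMeasure_distribution [Nonempty G] {δ : ℝ≥0∞} (hδ : δ ≤ 1) (θ : Θ) :
    IsProbabilityMeasure (F.distribution δ θ) :=
  have := isProbabilityMeasure_mixedUniform (J := G × Bool) hδ
  Measure.isProbabilityMeasure_map (.of_discrete)

lemma distribution_label_eq_target [Nonempty G] {δ : ℝ≥0∞} (hδ : δ ≤ 1) (θ : Θ) :
    F.distribution δ θ {p | p.2 = F.target θ p.1} = 1 := by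
  have := isProbabilityMeasure_mixedUniform (J := G × Bool) hδ
  have := F.isProbabilityMeasure_distribution hδ θ
  refine prob_le_one.antisymm ?_
  calc 1 = mixedUniform (G × Bool) δ (F.draw θ ⁻¹' {p | p.2 = F.target θ p.1}) := by
        simp [Set.preimage, F.target_draw θ]
    _ ≤ _ := Measure.le_map_apply .of_discrete _

variable [MeasurableSingletonClass X]

lemma msupport_distribution_subset [TopologicalSpace X] [T1Space X] (δ : ℝ≥0∞) (θ : Θ) :
    msupport (F.distribution δ θ) ⊆ Set.range (F.draw θ) :=
  msupport_map_subset_range _ _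

lemma antitone_expectedAtk_distribution [Nonempty G] {δ : ℝ≥0∞} (hδ : δ ≤ 1) (θ : Θ) :
    Antitone (expectedAtk (F.distribution δ θ) μ (F.target θ) a) :=
  have := isProbabilityMeasure_mixedUniform (J := G × Bool) hδ
  antitone_expectedAtk _ (F.target_draw θ) μ a

lemma sum_setLIntegral_pairError_le_expectedAtk [SFinite μ] {δ : ℝ≥0∞} [Nonempty G] (hδ : δ ≤ 1)
    (θ : Θ) (m : ℕ) :
    δ / Fintype.card (G × Bool) * ∑ A, ∫⁻ ι in Set.univ.pi fun _ => F.farDraws A,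
        F.pairError μ a θ A (F.poisonedSample θ A ι) ∂samples (mixedUniform (G × Bool) δ) m ≤
      expectedAtk (F.distribution δ θ) μ (F.target θ) a m := by
  have := isProbabilityMeasure_mixedUniform (J := G × Bool) hδ
  simp only [expectedAtk, distribution, lintegral_samples_map,
    ← lintegral_indicator MeasurableSet.of_discrete]
  rw [← lintegral_finsetSum _ fun _ _ => .of_discrete, ← lintegral_const_mul _ .of_discrete]
  refine lintegral_mono fun ι => le_trans ?_
    (lintegral_le_atkRand _ (F.draw θ) μ _ (F.swapAttack_clean θ ι) a)
  rw [lintegral_mixedUniform, Fintype.sum_prod_type]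
  refine le_trans ?_ le_add_self
  gcongr with A
  refine Set.indicator_apply_le' (fun hι => ?_) fun _ => zero_le
  simp only [draw, F.target_point, F.swapAttack_point θ fun j => hι j trivial, pairError,
    poisonedSample, le_refl]

theorem exists_le_expectedAtk [Finite Θ] [Nonempty Θ] [Nonempty G] [IsProbabilityMeasure μ]
    {δ q : ℝ≥0∞} (hδ : δ ≤ 1) (hq : ∀ A, (F.near A).card ≤ q * Fintype.card G) (m : ℕ) :
    ∃ θ, δ / 2 * (1 - m * (δ * q)) ≤
      expectedAtk (F.distribution δ θ) μ (F.target θ) a m := by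
  cases nonempty_fintype Θ
  have := isProbabilityMeasure_mixedUniform (J := G × Bool) hδ
  set law := mixedUniform (G × Bool) δ
  have hfar (A : G) : 1 - m * (δ * q) ≤ samples law m (Set.univ.pi fun _ => F.farDraws A) :=
    (tsub_le_tsub_left (by gcongr; exact F.mixedUniform_compl_farDraws_le (hq A) δ) 1).trans
      (one_sub_le_samples_pi law .of_discrete m)
  have hhalf : δ / Fintype.card (G × Bool) * Fintype.card G = δ / 2 := by
    rw [← ENNReal.mul_div_right_comm, mul_comm δ, Fintype.card_prod, Fintype.card_bool,
      Nat.cast_mul, ENNReal.mul_div_mul_left _ _ (by simp) (natCast_ne_top _), Nat.cast_ofNat]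
  have hsum : ∑ _θ : Θ, δ / 2 * (1 - m * (δ * q)) ≤
      ∑ θ, expectedAtk (F.distribution δ θ) μ (F.target θ) a m := calc
    _ = δ / Fintype.card (G × Bool) * ∑ _A : G, Fintype.card Θ * (1 - m * (δ * q)) := by
      simp only [Finset.sum_const, Finset.card_univ, nsmul_eq_mul, ← hhalf]; ring
    _ ≤ δ / Fintype.card (G × Bool) * ∑ A, ∑ θ, ∫⁻ ι in Set.univ.pi fun _ => F.farDraws A,
          F.pairError μ a θ A (F.poisonedSample θ A ι) ∂samples law m := by
      gcongr with A
      exact (mul_le_mul_right (hfar A) _).trans (F.card_mul_le_sum_setLIntegral_pairError μ a A _ _)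
    _ ≤ _ := by
      rw [Finset.sum_comm, Finset.mul_sum]
      exact Finset.sum_le_sum fun θ _ =>
        F.sum_setLIntegral_pairError_le_expectedAtk μ a hδ θ m
  obtain ⟨θ, -, hθ⟩ := ENNReal.exists_le_of_sum_le Finset.univ_nonempty hsum
  exact ⟨θ, hθ⟩

end SwapFamily

/-! ### Uniform set families with small intersections -/

section SizedFamily

open Finset

variable {ι α : Type*} [Fintype ι] [DecidableEq α]

lemma sum_pow_card_agree [DecidableEq ι] [Fintype α] (t : ℕ) (x : ι → α) :
    ∑ y : ι → α, (t + 1) ^ #{i | x i = y i} = (Fintype.card α + t) ^ Fintype.card ι := calc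
  _ = ∑ y : ι → α, ∏ i, if x i = y i then t + 1 else 1 := by
    simp only [prod_ite, prod_const, one_pow, mul_one]
  _ = ∏ i : ι, ∑ b, if x i = b then t + 1 else 1 := by
    rw [prod_univ_sum, Fintype.piFinset_univ]
  _ = (Fintype.card α + t) ^ Fintype.card ι := by
    have hletter (i : ι) : ∑ b, (if x i = b then t + 1 else 1) = Fintype.card α + t := by
      have hsplit (b : α) : (if x i = b then t + 1 else 1) = 1 + if x i = b then t else 0 := by
        split_ifs <;> ring
      simp [hsplit, sum_add_distrib]
    simp only [hletter, prod_const, card_univ]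

-- Markov's inequality for the exponential moment `8 ^ #agreements`.
lemma card_le_three_mul_agree_mul_le [DecidableEq ι] [Fintype α] (x : ι → α) :
    #{y : ι → α | Fintype.card ι ≤ 3 * #{i | x i = y i}} * 2 ^ Fintype.card ι ≤
      (Fintype.card α + 7) ^ Fintype.card ι := by
  rw [← sum_pow_card_agree 7 x, ← smul_eq_mul]
  refine le_trans (card_nsmul_le_sum _ _ _ fun y hy => ?_)
    (sum_le_univ_sum_of_nonneg fun _ => Nat.zero_le _)
  calc 2 ^ Fintype.card ι ≤ 2 ^ (3 * #{i | x i = y i}) :=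
        Nat.pow_le_pow_right two_pos (mem_filter.1 hy).2
    _ = (7 + 1) ^ #{i | x i = y i} := pow_mul 2 3 _

/-- The graph of the word `y`, so that common elements of graphs are agreements of words. -/
def wordGraph [Fintype α] (y : ι → α) : Finset (ι × α) := {p | y p.1 = p.2}

lemma card_wordGraph_inter [DecidableEq ι] [Fintype α] (x y : ι → α) :
    #(wordGraph x ∩ wordGraph y) = #{i | x i = y i} := by
  refine card_nbij' Prod.fst (fun i => (i, x i)) ?_ ?_ ?_ ?_ <;>
    simp +contextual [wordGraph, Set.MapsTo, Set.LeftInvOn, Set.RightInvOn]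

lemma card_wordGraph [Fintype α] (y : ι → α) : #(wordGraph y) = Fintype.card ι := by
  classical
  simpa using card_wordGraph_inter y y

lemma wordGraph_injective [Fintype α] :
    Function.Injective (wordGraph : (ι → α) → Finset (ι × α)) := fun x y h => by
  ext i
  simpa [wordGraph, eq_comm] using Finset.ext_iff.1 h (i, x i)

lemma exists_sized_wordGraphs {ι α κ : Type*} [Fintype ι] [Fintype α] [DecidableEq κ]
    (φ : ι × α ↪ κ) :
    ∃ 𝒜 : Finset (Finset κ), #𝒜 = Fintype.card α ^ Fintype.card ι ∧
      (𝒜 : Set (Finset κ)).Sized (Fintype.card ι) ∧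
      ∀ A ∈ 𝒜, #{B ∈ 𝒜 | Fintype.card ι ≤ 3 * #(A ∩ B)} * 2 ^ Fintype.card ι ≤
        (Fintype.card α + 7) ^ Fintype.card ι := by
  classical
  refine ⟨univ.map (Function.Embedding.trans ⟨wordGraph, wordGraph_injective⟩
    (mapEmbedding φ).toEmbedding), ?_, ?_, ?_⟩
  · simp
  · simp [Set.Sized, card_wordGraph]
  · refine forall_mem_map.2 fun x _ => ?_
    simpa [filter_map, ← map_inter, card_wordGraph_inter, Function.comp_def] using
      card_le_three_mul_agree_mul_le x

lemma one_le_exp_mul_of_le {n : ℕ} (hn : n ≠ 0) (hn' : n ≤ 128) :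
    1 ≤ Real.exp (-((n - 1) / 128)) * n := by
  have h1 : (1 : ℝ) ≤ n := by exact_mod_cast Nat.one_le_iff_ne_zero.2 hn
  have h128 : (n : ℝ) ≤ 128 := by exact_mod_cast hn'
  calc (1 : ℝ) ≤ (1 - (n - 1) / 128) * n := by nlinarith
    _ ≤ Real.exp (-((n - 1) / 128)) * n := by gcongr; exact Real.one_sub_le_exp_neg _

lemma div_pow_le_exp {n s : ℕ} (hns : n ≤ 17 * s + 1) :
    (19 / 24 : ℝ) ^ s ≤ Real.exp (-((n - 1) / 128)) := by
  have hns' : (n : ℝ) ≤ 17 * s + 1 := by exact_mod_cast hns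
  calc (19 / 24 : ℝ) ^ s ≤ Real.exp (-(17 / 128)) ^ s := by
        gcongr; exact le_trans (by norm_num) (Real.one_sub_le_exp_neg _)
    _ = Real.exp (s * -(17 / 128)) := (Real.exp_nat_mul _ _).symm
    _ ≤ Real.exp (-((n - 1) / 128)) := by gcongr; linarith

lemma exists_sized_family {n : ℕ} (hn : n ≠ 0) :
    ∃ (s : ℕ) (𝒜 : Finset (Finset (Fin n))), 𝒜.Nonempty ∧
      (𝒜 : Set (Finset (Fin n))).Sized s ∧ n ≤ 25 * s ∧
      ∀ A ∈ 𝒜, (#{B ∈ 𝒜 | s ≤ 3 * #(A ∩ B)} : ℝ) ≤ Real.exp (-((n - 1) / 128)) * #𝒜 := by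
  rcases lt_or_ge n 24 with hn24 | hn24
  · refine ⟨1, univ.map ⟨singleton, singleton_injective⟩, ?_, ?_, by lia, fun A hA => ?_⟩
    · exact (univ_nonempty_iff.2 (Fin.pos_iff_nonempty.1 (Nat.pos_of_ne_zero hn))).map
    · simp [Set.Sized]
    · obtain ⟨i, -, rfl⟩ := mem_map.1 hA
      have hone : #{j | 1 ≤ 3 * #({i} ∩ {j})} = 1 := card_eq_one.2 ⟨i, by
        ext j; by_cases h : i = j <;> simp [h, eq_comm]⟩
      simpa [filter_map, Function.comp_def, hone] using one_le_exp_mul_of_le hn (by lia)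
  · set s := n / 12
    obtain ⟨𝒜, hcard, hsized, hnear⟩ := exists_sized_wordGraphs <|
      finProdFinEquiv.toEmbedding.trans (Fin.castLEEmb (Nat.div_mul_le_self n 12))
    simp only [Fintype.card_fin] at hcard hsized hnear
    refine ⟨s, 𝒜, card_pos.1 (by rw [hcard]; positivity), hsized, by lia, fun A hA => ?_⟩
    calc (#{B ∈ 𝒜 | s ≤ 3 * #(A ∩ B)} : ℝ) ≤ 19 ^ s / 2 ^ s := by
          rw [le_div_iff₀ (by positivity)]
          exact_mod_cast hnear A hA
      _ = (19 / 24) ^ s * #𝒜 := by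
          rw [hcard, ← div_pow, Nat.cast_pow, ← mul_pow]
          norm_num
      _ ≤ Real.exp (-((n - 1) / 128)) * #𝒜 := by
          gcongr
          exact div_pow_le_exp (by lia)

end SizedFamily

/-! ### Halfspaces with sign normals -/

/-- The sign `±1` of a label, used both for labels and for coordinates of sign vectors. -/
def boolSign (y : Bool) : ℝ := if y then 1 else -1

lemma boolSign_not (y : Bool) : boolSign (!y) = -boolSign y := by cases y <;> simp [boolSign]

lemma boolSign_mul_self (y : Bool) : boolSign y * boolSign y = 1 := by cases y <;> simp [boolSign]

lemma abs_boolSign (y : Bool) : |boolSign y| = 1 := by cases y <;> simp [boolSign]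

lemma boolSign_ne_zero (y : Bool) : boolSign y ≠ 0 := by cases y <;> simp [boolSign]

lemma decide_boolSign_mul_add_nonneg (y : Bool) {t b : ℝ} (hb : 0 ≤ b) (ht : b < t) :
    decide (0 ≤ boolSign y * t + b) = y := by
  cases y <;> simp [boolSign] <;> linarith

section Signs

variable {ι E : Type*} [NormedAddCommGroup E] [InnerProductSpace ℝ E] {v : ι → E} {s : ℕ}

/-- The combination of the vectors `v i`, `i ∈ A`, with the signs `σ i`. -/
def signedSum (v : ι → E) (σ : ι → Bool) (A : Finset ι) : E := ∑ i ∈ A, boolSign (σ i) • v i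

lemma inner_signedSum_signedSum [DecidableEq ι] (hv : Orthonormal ℝ v) (σ τ : ι → Bool)
    (A B : Finset ι) :
    ⟪signedSum v σ A, signedSum v τ B⟫ = ∑ i ∈ A ∩ B, boolSign (σ i) * boolSign (τ i) := by
  simp [signedSum, sum_inner, inner_sum, inner_smul_left, inner_smul_right,
    orthonormal_iff_ite.1 hv, Finset.sum_ite_mem, Finset.inter_comm A, mul_comm]

lemma norm_signedSum (hv : Orthonormal ℝ v) (σ : ι → Bool) (A : Finset ι) :
    ‖signedSum v σ A‖ = √A.card := by
  classical
  rw [norm_eq_sqrt_real_inner, inner_signedSum_signedSum hv]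
  simp [boolSign_mul_self]

lemma inner_signedSum_ne_zero_iff (hv : Orthonormal ℝ v) {σ : ι → Bool} {A : Finset ι} {i : ι} :
    ⟪v i, signedSum v σ A⟫ ≠ 0 ↔ i ∈ A := by
  classical
  simp [signedSum, inner_sum, inner_smul_right, orthonormal_iff_ite.1 hv, boolSign_ne_zero]

/-- The point of label `y` in direction `A` for the halfspace with sign pattern `σ`; it has norm
`1` if `A` has `s` elements. -/
noncomputable def signVertex (v : ι → E) (s : ℕ) (σ : ι → Bool) (A : Finset ι) (y : Bool) : E :=
  (boolSign y * (√s)⁻¹) • signedSum v σ A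

lemma norm_signVertex (hv : Orthonormal ℝ v) (hs : s ≠ 0) (σ : ι → Bool) {A : Finset ι}
    (hA : A.card = s) (y : Bool) : ‖signVertex v s σ A y‖ = 1 := by
  have : √s ≠ 0 := by positivity
  rw [signVertex, norm_smul, norm_signedSum hv, hA, norm_mul, norm_inv,
    Real.norm_of_nonneg (Real.sqrt_nonneg s), Real.norm_eq_abs, abs_boolSign, one_mul,
    inv_mul_cancel₀ this]

lemma eq_of_signVertex_eq (hv : Orthonormal ℝ v) (hs : s ≠ 0) {σ : ι → Bool} {A B : Finset ι}
    {y z : Bool} (h : signVertex v s σ A y = signVertex v s σ B z) : A = B := by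
  have hmem (C : Finset ι) (y : Bool) (i : ι) : i ∈ C ↔ ⟪v i, signVertex v s σ C y⟫ ≠ 0 := by
    rw [signVertex, inner_smul_right, mul_ne_zero_iff, inner_signedSum_ne_zero_iff hv]
    have : √s ≠ 0 := by positivity
    simp [boolSign_ne_zero, this]
  ext i
  rw [hmem A y, h, ← hmem]

/-- The normal vector of the halfspace with sign pattern `σ`, scaled so that it has inner product
`±1` with its own `signVertex`es. -/
noncomputable def signNormal [Fintype ι] (v : ι → E) (s : ℕ) (σ : ι → Bool) : E :=
  (√s)⁻¹ • signedSum v σ Finset.univ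

lemma norm_signNormal [Fintype ι] (hv : Orthonormal ℝ v) (s : ℕ) (σ : ι → Bool) :
    ‖signNormal v s σ‖ = √(Fintype.card ι / s) := by
  simp [signNormal, norm_smul, norm_signedSum hv, div_eq_inv_mul]

lemma norm_signNormal_le [Fintype ι] (hv : Orthonormal ℝ v) (hns : Fintype.card ι ≤ 25 * s)
    (σ : ι → Bool) : ‖signNormal v s σ‖ ≤ 5 := by
  have hns' : (Fintype.card ι : ℝ) ≤ 25 * s := by exact_mod_cast hns
  rw [norm_signNormal hv, Real.sqrt_le_left (by norm_num)]
  exact div_le_of_le_mul₀ s.cast_nonneg (by norm_num) (by linarith)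

lemma signNormal_ne_zero [Fintype ι] [Nonempty ι] (hv : Orthonormal ℝ v) (hs : s ≠ 0)
    (σ : ι → Bool) : signNormal v s σ ≠ 0 := by
  rw [← norm_ne_zero_iff, norm_signNormal hv]
  positivity

variable [DecidableEq ι]

/-- The sign pattern `σ` with its values on `A` negated. -/
def flipOn (A : Finset ι) (σ : ι → Bool) : ι → Bool := fun i => if i ∈ A then !σ i else σ i

lemma flipOn_involutive (A : Finset ι) : Function.Involutive (flipOn A) := fun σ => by
  ext i; by_cases hi : i ∈ A <;> simp [flipOn, hi]

lemma boolSign_mul_boolSign_flipOn (A : Finset ι) (σ : ι → Bool) (i : ι) :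
    boolSign (σ i) * boolSign (flipOn A σ i) = if i ∈ A then -1 else 1 := by
  by_cases hi : i ∈ A <;> simp [flipOn, hi, boolSign_not, boolSign_mul_self]

lemma signedSum_flipOn_self (σ : ι → Bool) (A : Finset ι) :
    signedSum v (flipOn A σ) A = -signedSum v σ A := by
  rw [signedSum, signedSum, ← Finset.sum_neg_distrib]
  refine Finset.sum_congr rfl fun i hi => ?_
  rw [flipOn, if_pos hi, boolSign_not, neg_smul]

lemma signVertex_flipOn_self (σ : ι → Bool) (A : Finset ι) (y : Bool) :
    signVertex v s (flipOn A σ) A y = signVertex v s σ A !y := by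
  simp [signVertex, signedSum_flipOn_self, boolSign_not]

variable [Fintype ι]

lemma inner_signedSum_flipOn (hv : Orthonormal ℝ v) (σ : ι → Bool) (A B : Finset ι) :
    ⟪signedSum v σ Finset.univ, signedSum v (flipOn A σ) B⟫ = B.card - 2 * (A ∩ B).card := by
  have hterm (i : ι) : boolSign (σ i) * boolSign (flipOn A σ i) = 1 - if i ∈ A then 2 else 0 := by
    rw [boolSign_mul_boolSign_flipOn]; split_ifs <;> norm_num
  simp [inner_signedSum_signedSum hv, hterm, Finset.sum_ite_mem, mul_comm, Finset.inter_comm]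

lemma inner_signNormal_signVertex_flipOn (hv : Orthonormal ℝ v) (hs : s ≠ 0) (σ : ι → Bool)
    (A : Finset ι) {B : Finset ι} (hB : B.card = s) (y : Bool) :
    ⟪signNormal v s σ, signVertex v s (flipOn A σ) B y⟫ =
      boolSign y * (1 - 2 * (A ∩ B).card / s) := by
  have hsq : √(s : ℝ) ^ 2 = s := Real.sq_sqrt s.cast_nonneg
  rw [signNormal, signVertex, real_inner_smul_left, real_inner_smul_right,
    inner_signedSum_flipOn hv, hB]
  field_simp
  rw [hsq]
  ring

omit [DecidableEq ι] in
lemma inner_signNormal_signVertex (hv : Orthonormal ℝ v) (hs : s ≠ 0) (σ : ι → Bool)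
    {A : Finset ι} (hA : A.card = s) (y : Bool) :
    ⟪signNormal v s σ, signVertex v s σ A y⟫ = boolSign y := by
  classical
  have hflip : flipOn ∅ σ = σ := funext fun i => by simp [flipOn]
  simpa [hflip] using inner_signNormal_signVertex_flipOn hv hs σ ∅ hA y

lemma lt_one_sub_two_mul_div {k : ℕ} (hk : 3 * k < s) : (1 / 3 : ℝ) < 1 - 2 * k / s := by
  have hs : (0 : ℝ) < s := by exact_mod_cast (Nat.zero_le _).trans_lt hk
  have hk' : (3 : ℝ) * k < s := by exact_mod_cast hk
  rw [lt_sub_comm, div_lt_iff₀ hs]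
  linarith

/-- The halfspaces with the normal vectors `signNormal v s σ`, separating the `signVertex`es of the
members of an `s`-uniform family, as a swap family on a ball. -/
noncomputable def signFamily (hv : Orthonormal ℝ v) (hs : s ≠ 0) {R : ℝ} (hR : 1 ≤ R)
    {𝒜 : Finset (Finset ι)} (h𝒜 : (𝒜 : Set (Finset ι)).Sized s) :
    SwapFamily {x : E // ‖x‖ ≤ R} (ι → Bool) 𝒜 where
  target σ x := decide (0 ≤ ⟪signNormal v s σ, x.1⟫ + 1 / 3)
  base := ⟨0, norm_zero.trans_le (zero_le_one.trans hR)⟩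
  point σ A y := ⟨signVertex v s σ A.1 y, (norm_signVertex hv hs σ (h𝒜 A.2) y).trans_le hR⟩
  swap A := flipOn A.1
  near A := {B | s ≤ 3 * (A.1 ∩ B.1).card}
  target_base σ := by simp
  target_point σ A y := by
    rw [inner_signNormal_signVertex hv hs σ (h𝒜 A.2), ← mul_one (boolSign y)]
    exact decide_boolSign_mul_add_nonneg y (by norm_num) (by norm_num)
  eq_of_point_eq_point h := Subtype.ext (eq_of_signVertex_eq hv hs (Subtype.ext_iff.1 h))
  swap_involutive A := flipOn_involutive A.1
  point_swap σ A y := Subtype.ext (signVertex_flipOn_self σ A.1 y)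
  target_point_swap σ A B y hB := by
    rw [inner_signNormal_signVertex_flipOn hv hs σ A.1 (h𝒜 B.2)]
    exact decide_boolSign_mul_add_nonneg y (by norm_num)
      (lt_one_sub_two_mul_div (by simpa using hB))

lemma card_near_signFamily (hv : Orthonormal ℝ v) (hs : s ≠ 0) {R : ℝ} (hR : 1 ≤ R)
    {𝒜 : Finset (Finset ι)} (h𝒜 : (𝒜 : Set (Finset ι)).Sized s) (A : 𝒜) :
    ((signFamily hv hs hR h𝒜).near A).card = {B ∈ 𝒜 | s ≤ 3 * (A.1 ∩ B).card}.card := by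
  rw [← Finset.card_map (Function.Embedding.subtype _)]
  congr 1
  ext B
  simp [signFamily, and_comm]

lemma le_margin_draw_signFamily (hv : Orthonormal ℝ v) (hs : s ≠ 0) {R : ℝ} (hR : 1 ≤ R)
    {𝒜 : Finset (Finset ι)} (h𝒜 : (𝒜 : Set (Finset ι)).Sized s) (σ : ι → Bool)
    (i : Option (𝒜 × Bool)) :
    1 / 3 ≤ boolSign ((signFamily hv hs hR h𝒜).draw σ i).2 *
      (⟪signNormal v s σ, ((signFamily hv hs hR h𝒜).draw σ i).1.1⟫ + 1 / 3) := by
  cases i with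
  | none => simp [SwapFamily.draw, signFamily, boolSign]
  | some z =>
    simp only [SwapFamily.draw, signFamily, inner_signNormal_signVertex hv hs σ (h𝒜 z.1.2)]
    cases z.2 <;> norm_num [boolSign]

end Signs

lemma ofReal_lt_half_mul_one_sub {ε t : ℝ} (hε : 0 < ε) {m : ℕ}
    (hm : m ≤ Real.exp t / (192 * ε)) :
    ENNReal.ofReal ε < ENNReal.ofReal (4 * ε) / 2 *
      (1 - m * (ENNReal.ofReal (4 * ε) * ENNReal.ofReal (Real.exp (-t)))) := by
  have hmiss : m * (4 * ε * Real.exp (-t)) ≤ 1 / 48 := calc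
    _ ≤ Real.exp t / (192 * ε) * (4 * ε * Real.exp (-t)) := by gcongr
    _ = 1 / 48 := by
      rw [Real.exp_neg]
      field_simp
      norm_num
  rw [← ENNReal.ofReal_natCast, ← ENNReal.ofReal_mul (by positivity),
    ← ENNReal.ofReal_mul (by positivity), ← ENNReal.ofReal_one,
    ← ENNReal.ofReal_sub _ (by positivity), ← ENNReal.ofReal_ofNat,
    ← ENNReal.ofReal_div_of_pos (by norm_num), ← ENNReal.ofReal_mul (by positivity)]
  exact (ENNReal.ofReal_lt_ofReal_iff (by nlinarith)).2 (by nlinarith)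

theorem stmt7_general {E : Type*} [NormedAddCommGroup E] [InnerProductSpace ℝ E]
    [MeasurableSpace E] [MeasurableSingletonClass E] {n : ℕ} (hn : n ≠ 0) {v : Fin n → E}
    (hv : Orthonormal ℝ v) {R : ℝ} (hR : 1 ≤ R) {ε : ℝ} (hε0 : 0 < ε) (hε : ε ≤ 1 / 4)
    {Ω : Type*} [MeasurableSpace Ω] (μ : Measure Ω) [IsProbabilityMeasure μ]
    (a : Multiset ({x : E // ‖x‖ ≤ R} × Bool) → Ω → {x : E // ‖x‖ ≤ R} → Bool) :
    ∃ (w : E) (b : ℝ), w ≠ 0 ∧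
    ∃ D : Measure ({x : E // ‖x‖ ≤ R} × Bool), IsProbabilityMeasure D ∧
      D {p | p.2 = decide (0 ≤ ⟪w, p.1.1⟫ + b)} = 1 ∧
      (∀ p ∈ msupport D,
        (1 / 8 : ℝ) * ‖w‖ / 2 ≤ (if p.2 then (1 : ℝ) else -1) * (⟪w, p.1.1⟫ + b)) ∧
      ∀ m : ℕ, (m : ℝ) ≤ Real.exp ((n - 1) / 128) / (192 * ε) →
        ENNReal.ofReal ε <
          ∫⁻ f, atkRand D μ (fun x => decide (0 ≤ ⟪w, x.1⟫ + b)) (toTrain f) a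
            ∂(samples D m) := by
  obtain ⟨s, 𝒜, hne, h𝒜, hns, hnear⟩ := exists_sized_family hn
  have hs : s ≠ 0 := by lia
  have := hne.coe_sort
  set F := signFamily hv hs hR h𝒜
  have hδ : ENNReal.ofReal (4 * ε) ≤ 1 := ENNReal.ofReal_le_one.2 (by linarith)
  have hq (A : 𝒜) : ((F.near A).card : ℝ≥0∞) ≤
      ENNReal.ofReal (Real.exp (-((n - 1) / 128))) * Fintype.card 𝒜 := by
    rw [card_near_signFamily, Fintype.card_coe, ← ENNReal.ofReal_natCast, ← ENNReal.ofReal_natCast,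
      ← ENNReal.ofReal_mul (Real.exp_nonneg _)]
    exact ENNReal.ofReal_le_ofReal (hnear A.1 A.2)
  obtain ⟨σ, hσ⟩ := F.exists_le_expectedAtk μ a hδ hq ⌊Real.exp ((n - 1) / 128) / (192 * ε)⌋₊
  have hw : ‖signNormal v s σ‖ ≤ 5 := norm_signNormal_le hv (by simpa using hns) σ
  have : NeZero n := ⟨hn⟩
  refine ⟨signNormal v s σ, 1 / 3, signNormal_ne_zero hv hs σ,
    F.distribution (ENNReal.ofReal (4 * ε)) σ, F.isProbabilityMeasure_distribution hδ σ,
    F.distribution_label_eq_target hδ σ, fun p hp => ?_, fun m hm => ?_⟩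
  · obtain ⟨i, rfl⟩ := F.msupport_distribution_subset _ σ hp
    exact le_trans (by linarith) (le_margin_draw_signFamily hv hs hR h𝒜 σ i)
  · calc ENNReal.ofReal ε < _ := ofReal_lt_half_mul_one_sub hε0 (Nat.floor_le (by positivity))
      _ ≤ _ := hσ
      _ ≤ _ := F.antitone_expectedAtk_distribution μ a hδ σ (Nat.le_floor hm)

/-- Lower bound for robust learning of linear classifiers with margin `1/8` in dimension
`n > 256`: every learner has expected attackable rate `> ε` whenever
`m ≤ e^{(n-1)/128}/(192 ε)`. -/
theorem stmt7 (n : ℕ) (hn : 256 < n) (ε : ℝ) (hε0 : 0 < ε) (hε : ε ≤ 1 / 16)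
    (Ω : Type*) (mΩ : MeasurableSpace Ω) (μ : Measure Ω) (hμ : IsProbabilityMeasure μ)
    (a : Multiset (Ball98 n × Bool) → Ω → Ball98 n → Bool) :
    ∃ (w : EuclideanSpace ℝ (Fin n)) (b : ℝ), w ≠ 0 ∧
    ∃ D : Measure (Ball98 n × Bool), IsProbabilityMeasure D ∧
      D {p : Ball98 n × Bool | p.2 = decide (0 ≤ ⟪w, p.1.1⟫ + b)} = 1 ∧
      (∀ p ∈ msupport D,
        (1 / 8 : ℝ) * ‖w‖ / 2 ≤ (if p.2 then (1 : ℝ) else -1) * (⟪w, p.1.1⟫ + b)) ∧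
      ∀ m : ℕ, (m : ℝ) ≤ Real.exp ((n - 1) / 128) / (192 * ε) →
        ENNReal.ofReal ε <
          ∫⁻ f, atkRand D μ (fun x => decide (0 ≤ ⟪w, x.1⟫ + b)) (toTrain f) a
            ∂(samples D m) :=
  stmt7_general (by lia) (EuclideanSpace.basisFun (Fin n) ℝ).orthonormal (by norm_num) hε0
    (by linarith) μ a
end
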